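/- arXiv:1802.03534 — 9 statements merged into one kernel-verified Lean document; each statement's English description precedes it below -/
import Mathlib

section
/- Let q = 2^s with s ≥ 2 and r = q⁴. For every nonzero β ∈ GF(r), the number of x ∈ GF(r) with Tr_{r/q}(β x^{q²−1}) = 0 equals q² if β is a (q+1)-th power in GF(r)^*, and equals q³ + q² − q otherwise. -/
section helpers

/-- Cardinality of the preimage of a subgroup. -/
lemma aux_card_comap {E : Type} [AddCommGroup E] [Finite E] (f : E →+ E) (H : AddSubgroup E) :
    Nat.card (H.comap f) = Nat.card f.ker * Nat.card (H ⊓ f.range : AddSubgroup E) := by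
  let g : H.comap f →+ E := f.comp (H.comap f).subtype
  have h1 := g.ker.card_mul_index
  rw [AddSubgroup.index_ker] at h1
  have hr : g.range = H ⊓ f.range := by
    ext x
    simp only [g, AddMonoidHom.mem_range, AddSubgroup.mem_inf]
    constructor
    · rintro ⟨⟨y, hy⟩, rfl⟩
      exact ⟨hy, y, rfl⟩
    · rintro ⟨hx, y, rfl⟩
      exact ⟨⟨y, hx⟩, rfl⟩
  have hk : Nat.card g.ker = Nat.card f.ker := by
    refine Nat.card_congr ⟨fun x => ⟨x.1.1, x.2⟩,
      fun x => ⟨⟨x.1, ?_⟩, x.2⟩, fun _ => rfl, fun _ => rfl⟩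
    have : f x.1 = 0 := x.2
    simp [AddSubgroup.mem_comap, this]
  rw [← h1, hk, hr]

variable {E : Type} [Field E] [Finite E] [CharP E 2] (φ : E →+* E)

/-- The map `x ↦ φ x + x`. -/
def auxD (φ : E →+* E) : E →+ E := φ.toAddMonoidHom + AddMonoidHom.id E

lemma auxD_apply (x : E) : auxD φ x = φ x + x := rfl

lemma mem_ker_auxD (x : E) : x ∈ (auxD φ).ker ↔ φ x = x := by
  rw [AddMonoidHom.mem_ker, auxD_apply, CharTwo.add_eq_zero]

lemma auxD_frob (x : E) : auxD (frobenius E 2) x = x ^ 2 + x := by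
  rw [auxD_apply, frobenius_def]

lemma mem_ker_frob (x : E) : x ∈ (auxD (frobenius E 2)).ker ↔ x = 0 ∨ x = 1 := by
  rw [AddMonoidHom.mem_ker, auxD_frob]
  have : x ^ 2 + x = x * (x + 1) := by ring
  rw [this, mul_eq_zero, CharTwo.add_eq_zero]

lemma card_ker_frob : Nat.card (auxD (frobenius E 2)).ker = 2 := by
  have : ((auxD (frobenius E 2)).ker : Set E) = {0, 1} := by
    ext x
    simp [← mem_ker_frob]
  have h2 : Nat.card (auxD (frobenius E 2)).ker = ((auxD (frobenius E 2)).ker : Set E).ncard := rfl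
  rw [h2, this, Set.ncard_pair zero_ne_one]

/-- If `φ` has order 2 and its fixed field has (at most) the right size, everything is exact. -/
lemma exact_of_card (n : ℕ) (hφ : ∀ x, φ (φ x) = x) (hn : Nat.card E = n ^ 2)
    (hle : Nat.card (auxD φ).ker ≤ n) :
    Nat.card (auxD φ).ker = n ∧ (auxD φ).range = (auxD φ).ker := by
  have h1 := (auxD φ).ker.card_mul_index
  rw [AddSubgroup.index_ker, hn] at h1
  have hr : (auxD φ).range ≤ (auxD φ).ker := by
    rintro _ ⟨x, rfl⟩
    rw [mem_ker_auxD, auxD_apply, map_add, hφ, add_comm]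
  have h2 : Nat.card (auxD φ).range ≤ Nat.card (auxD φ).ker :=
    Nat.card_le_card_of_injective _ (AddSubgroup.inclusion_injective hr)
  have h3 : Nat.card (auxD φ).ker = n := by
    refine le_antisymm hle ?_
    by_contra h
    push Not at h
    nlinarith
  refine ⟨h3, AddSubgroup.eq_of_le_of_card_ge hr ?_⟩
  rw [h3] at h1 ⊢
  have : 0 < n := h3 ▸ Nat.card_pos
  nlinarith

/-- Every element of the fixed field of `ψ` is of the form `w ^ 2 + w`. -/
lemma artin_surj (ψ : E →+* E) (n : ℕ) (hn : Nat.card (auxD ψ).ker = n)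
    (hr : (auxD ψ).range = (auxD ψ).ker) :
    (auxD ψ).ker ≤ (auxD (frobenius E 2)).range := by
  have h1 := aux_card_comap (auxD ψ) (auxD (frobenius E 2)).ker
  have h2 := aux_card_comap (auxD (frobenius E 2)) (auxD ψ).ker
  have hle : (auxD (frobenius E 2)).ker ≤ (auxD ψ).range := by
    rw [hr]
    intro x hx
    rw [mem_ker_auxD]
    rcases (mem_ker_frob x).1 hx with rfl | rfl <;> simp
  have he : (auxD (frobenius E 2)).ker.comap (auxD ψ) =
      (auxD ψ).ker.comap (auxD (frobenius E 2)) := by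
    ext x
    rw [AddSubgroup.mem_comap, AddSubgroup.mem_comap, AddMonoidHom.mem_ker, AddMonoidHom.mem_ker,
      auxD_frob, auxD_frob, auxD_apply, auxD_apply, map_add, map_pow, CharTwo.add_sq]
    constructor <;> intro h <;> linear_combination h
  rw [inf_eq_left.2 hle, card_ker_frob, hn, he, h2, card_ker_frob] at h1
  have h3 : Nat.card ((auxD ψ).ker ⊓ (auxD (frobenius E 2)).range : AddSubgroup E) = n := by omega
  have h4 := AddSubgroup.eq_of_le_of_card_ge
    (inf_le_left : (auxD ψ).ker ⊓ (auxD (frobenius E 2)).range ≤ _) (by rw [h3, hn])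
  exact inf_eq_left.1 h4

/-- The key count. -/
lemma count_w (q : ℕ) (hφ : ∀ x, φ (φ (φ (φ x))) = x) (hE : Nat.card E = q ^ 4)
    (h1 : Nat.card (auxD φ).ker = q) (h2 : Nat.card (auxD (φ.comp φ)).ker ≤ q ^ 2)
    (a : E) (ha : φ (φ a) = a) (ha1 : φ a ≠ a) :
    {w : E | φ (φ w) = w + 1 ∧ φ a * (w ^ 2 + w) = a * φ (w ^ 2 + w)}.ncard = q := by
  have ha0 : a ≠ 0 := by rintro rfl; simp at ha1
  obtain ⟨h3, h4⟩ := exact_of_card (φ.comp φ) (q ^ 2) hφ (by rw [hE]; ring) h2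
  have hs := artin_surj _ _ h3 h4
  -- the line `a K1`
  let H : AddSubgroup E := (auxD φ).ker.map (AddMonoidHom.mulLeft a)
  have hH : ∀ x, x ∈ H ↔ φ a * x = a * φ x := by
    intro x
    simp only [H, AddSubgroup.mem_map, mem_ker_auxD, AddMonoidHom.coe_mulLeft]
    constructor
    · rintro ⟨c, hc, rfl⟩
      rw [map_mul, hc]; ring
    · intro h
      refine ⟨x / a, ?_, by field_simp⟩
      have : φ a ≠ 0 := by simpa using ha0
      rw [map_div₀]
      field_simp
      linear_combination -h
  have hHc : Nat.card H = q := by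
    rw [← h1]
    exact (Nat.card_congr ((auxD φ).ker.equivMapOfInjective _
      (mul_right_injective₀ ha0)).toEquiv).symm
  have hHK : ∀ x ∈ H, φ (φ x) = x := by
    rintro _ ⟨c, hc, rfl⟩
    have hc : φ c = c := (mem_ker_auxD φ c).1 hc
    simp [hc, ha]
  have hHr : H ≤ (auxD (frobenius E 2)).range := fun x hx => hs ((mem_ker_auxD _ x).2 (hHK x hx))
  have hA := aux_card_comap (auxD (frobenius E 2)) H
  rw [inf_eq_left.2 hHr, hHc, card_ker_frob] at hA
  -- the preimage, split in two
  let A0 : Set E := {w : E | φ (φ w) = w ∧ φ a * (w ^ 2 + w) = a * φ (w ^ 2 + w)}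
  let A1 : Set E := {w : E | φ (φ w) = w + 1 ∧ φ a * (w ^ 2 + w) = a * φ (w ^ 2 + w)}
  have hmem : ∀ w, w ∈ H.comap (auxD (frobenius E 2)) ↔
      φ a * (w ^ 2 + w) = a * φ (w ^ 2 + w) := by
    intro w
    rw [AddSubgroup.mem_comap, hH, auxD_frob]
  have hsplit : ((H.comap (auxD (frobenius E 2)) : AddSubgroup E) : Set E) = A0 ∪ A1 := by
    ext w
    rw [SetLike.mem_coe, hmem]
    simp only [A0, A1, Set.mem_union, Set.mem_ofPred_eq]
    constructor
    · intro h
      have hk := hHK _ ((hH _).2 h)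
      have : φ (φ w) + w ∈ (auxD (frobenius E 2)).ker := by
        rw [AddMonoidHom.mem_ker, auxD_frob, CharTwo.add_sq]
        simp only [map_add, map_pow] at hk
        have e : φ (φ w) ^ 2 + w ^ 2 + (φ (φ w) + w) = (φ (φ w) ^ 2 + φ (φ w)) + (w ^ 2 + w) := by
          ring
        rw [e, hk, CharTwo.add_self_eq_zero]
      rcases (mem_ker_frob _).1 this with h5 | h5
      · exact Or.inl ⟨CharTwo.add_eq_zero.1 h5, h⟩
      · refine Or.inr ⟨?_, h⟩
        rw [← h5, add_comm w, add_assoc, CharTwo.add_self_eq_zero, add_zero]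
    · rintro (h | h) <;> exact h.2
  have hdisj : Disjoint A0 A1 := by
    rw [Set.disjoint_left]
    rintro w ⟨h, -⟩ ⟨h', -⟩
    rw [h] at h'
    simp at h'
  have hcard : A0.ncard + A1.ncard = 2 * q := by
    rw [← Set.ncard_union_eq hdisj, ← hsplit, ← hA]
    rfl
  -- `A1` is nonempty
  have hne : ∃ w, w ∈ A1 := by
    by_contra hno
    push Not at hno
    -- Artin-Schreier would be surjective on `K1`
    let K := (auxD φ).ker
    have hK : ∀ x, x ∈ K ↔ φ x = x := mem_ker_auxD φ
    let f : K → K := fun v => ⟨v.1 ^ 2 + v.1, by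
      rw [hK, map_add, map_pow, (hK _).1 v.2]⟩
    have hsurj : Function.Surjective f := by
      rintro ⟨c, hc⟩
      have hc' := (hK c).1 hc
      have htr : φ a + a ≠ 0 := fun h => ha1 (CharTwo.add_eq_zero.1 h)
      have hcK : φ (c / (φ a + a)) = c / (φ a + a) := by
        rw [map_div₀, map_add, hc', ha, add_comm a]
      have hin : a * (c / (φ a + a)) ∈ H := ⟨_, (hK _).2 hcK, rfl⟩
      obtain ⟨w, hw⟩ := hHr hin
      rw [auxD_frob] at hw
      have hwA : w ∈ A0 ∪ A1 := by
        rw [← hsplit, SetLike.mem_coe, hmem, hw, ← hH]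
        exact hin
      have hw0 : φ (φ w) = w := (hwA.resolve_right (hno w)).1
      refine ⟨⟨φ w + w, (hK _).2 (by rw [map_add, hw0, add_comm])⟩, ?_⟩
      apply Subtype.ext
      change (φ w + w) ^ 2 + (φ w + w) = c
      have hw2 := congrArg φ hw
      rw [map_add, map_pow, map_mul, hcK] at hw2
      rw [CharTwo.add_sq]
      have : φ w ^ 2 + w ^ 2 + (φ w + w) = (φ a + a) * (c / (φ a + a)) := by
        linear_combination hw + hw2
      rw [this]
      field_simp
    have hinj := Finite.injective_iff_surjective.2 hsurj
    have : (⟨0, K.zero_mem⟩ : K) = ⟨1, (hK 1).2 (map_one φ)⟩ := by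
      apply hinj
      apply Subtype.ext
      change (0 : E) ^ 2 + 0 = 1 ^ 2 + 1
      rw [one_pow, CharTwo.add_self_eq_zero]; simp
    exact zero_ne_one (congrArg Subtype.val this)
  obtain ⟨w0, hw0, hw0'⟩ := hne
  have heq : A0.ncard = A1.ncard := by
    refine Set.ncard_congr (fun w _ => w + w0) ?_ ?_ ?_
    · rintro w ⟨h, h'⟩
      refine ⟨by simp only [map_add, h, hw0]; ring, ?_⟩
      rw [← hmem] at h' hw0' ⊢
      exact AddSubgroup.add_mem _ h' hw0'
    · intro w w' _ _ h
      exact add_right_cancel h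
    · rintro w ⟨h, h'⟩
      refine ⟨w - w0, ⟨by simp only [map_sub, h, hw0]; ring, ?_⟩, by ring⟩
      rw [← hmem] at h' hw0' ⊢
      exact AddSubgroup.sub_mem _ h' hw0'
  change A1.ncard = q
  omega

/-- In the degenerate case there are no solutions. -/
lemma count_w_zero (a : E) (ha0 : a ≠ 0) (ha1 : φ a = a) :
    {w : E | φ (φ w) = w + 1 ∧ φ a * (w ^ 2 + w) = a * φ (w ^ 2 + w)}.ncard = 0 := by
  have : {w : E | φ (φ w) = w + 1 ∧ φ a * (w ^ 2 + w) = a * φ (w ^ 2 + w)} = ∅ := by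
    ext w
    simp only [Set.mem_ofPred_eq, Set.mem_empty_iff_false, iff_false, not_and]
    intro h h'
    rw [ha1] at h'
    have h' := mul_left_cancel₀ ha0 h'
    simp only [map_add, map_pow] at h'
    have hk : φ w + w ∈ (auxD (frobenius E 2)).ker := by
      rw [AddMonoidHom.mem_ker, auxD_frob, CharTwo.add_sq]
      have e : φ w ^ 2 + w ^ 2 + (φ w + w) = (φ w ^ 2 + φ w) + (w ^ 2 + w) := by ring
      rw [e, h', CharTwo.add_self_eq_zero]
    have hc : φ (φ w) = w := by
      rcases (mem_ker_frob _).1 hk with h5 | h5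
      · have h6 := CharTwo.add_eq_zero.1 h5
        rw [h6, h6]
      · have h6 : φ w = w + 1 := by
          rw [← h5, add_comm w, add_assoc, CharTwo.add_self_eq_zero, add_zero]
        rw [h6, map_add, h6, map_one, add_assoc, CharTwo.add_self_eq_zero, add_zero]
    rw [hc] at h
    simp at h
  rw [this, Set.ncard_empty]

/-- From the count of `w` to the count of `z`. -/
lemma count_z (n m : ℕ) (h2 : Nat.card (auxD (φ.comp φ)).ker = n)
    (hφ : ∀ x, φ (φ (φ (φ x))) = x)
    (a : E) (ha0 : a ≠ 0) (ha : φ (φ a) = a)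
    (hm : {w : E | φ (φ w) = w + 1 ∧ φ a * (w ^ 2 + w) = a * φ (w ^ 2 + w)}.ncard = m)
    (T : E → E) (hT : ∀ y, T y = y + φ y + φ (φ y) + φ (φ (φ y))) :
    {z : E | T (a * (φ (φ z) / z)) = 0}.ncard = n + m * (n - 1) := by
  let W : Set E := {w : E | φ (φ w) = w + 1 ∧ φ a * (w ^ 2 + w) = a * φ (w ^ 2 + w)}
  let K : Set E := ((auxD (φ.comp φ)).ker : Set E)
  have hK : ∀ x, x ∈ K ↔ φ (φ x) = x := mem_ker_auxD (φ.comp φ)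
  have hKc : K.ncard = n := h2
  have hcond : ∀ w t, φ (φ w) = w + 1 → t ∈ K → t ≠ 0 →
      (T (a * (φ (φ (w * t)) / (w * t))) = 0 ↔ φ a * (w ^ 2 + w) = a * φ (w ^ 2 + w)) := by
    intro w t hw ht ht0
    have hw0 : w ≠ 0 := by rintro rfl; simp at hw
    have hw1 : w + 1 ≠ 0 := by rw [← hw]; simpa using hw0
    have hp0 : φ w ≠ 0 := by simpa using hw0
    have hp1 : φ w + 1 ≠ 0 := by
      have : φ (w + 1) ≠ 0 := (map_ne_zero φ).2 hw1
      rwa [map_add, map_one] at this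
    have hy : φ (φ (w * t)) / (w * t) = (w + 1) / w := by
      rw [map_mul, map_mul, hw, (hK t).1 ht]
      field_simp
    have two : (2 : E) = 0 := CharTwo.two_eq_zero
    have key : T (a * ((w + 1) / w)) * (w * (w + 1) * φ w * (φ w + 1)) =
        a * φ (w ^ 2 + w) + φ a * (w ^ 2 + w) := by
      rw [hT]
      simp only [map_mul, map_div₀, map_add, map_one, ha, hw, map_pow]
      have e1 : w + 1 + 1 = w := by linear_combination two
      have e2 : φ w + 1 + 1 = φ w := by linear_combination two
      rw [e1, e2]
      field_simp
      linear_combination (w ^ 2 + w) * (φ w ^ 2 + φ w) * (a + φ a) * two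
    rw [hy]
    have hnz : w * (w + 1) * φ w * (φ w + 1) ≠ 0 := by positivity
    constructor
    · intro h
      rw [h, zero_mul] at key
      exact (CharTwo.add_eq_zero.1 key.symm).symm
    · intro h
      rw [h, CharTwo.add_self_eq_zero] at key
      exact (mul_eq_zero.1 key).resolve_right hnz
  have hset : {z : E | T (a * (φ (φ z) / z)) = 0} =
      K ∪ (fun p : E × E => p.1 * p.2) '' (W ×ˢ (K \ {0})) := by
    ext z
    simp only [Set.mem_ofPred_eq, Set.mem_union, Set.mem_image, Prod.exists, Set.mem_prod,
      Set.mem_sdiff, Set.mem_singleton_iff]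
    by_cases hz : z ∈ K
    · simp only [hz, true_or, iff_true]
      have hz' := (hK z).1 hz
      rw [hz', hT]
      by_cases h0 : z = 0
      · simp [h0]
      · rw [div_self h0, mul_one, ha]
        linear_combination (a + φ a) * (CharTwo.two_eq_zero : (2 : E) = 0)
    · simp only [hz, false_or]
      constructor
      · intro h
        have ht0 : φ (φ z) + z ≠ 0 := fun h => hz ((hK z).2 (CharTwo.add_eq_zero.1 h))
        have htK : φ (φ z) + z ∈ K := by
          rw [hK, map_add, map_add, hφ, add_comm]
        have hw : φ (φ (z / (φ (φ z) + z))) = z / (φ (φ z) + z) + 1 := by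
          rw [map_div₀, map_div₀, (hK _).1 htK]
          field_simp
          linear_combination -z * (CharTwo.two_eq_zero : (2 : E) = 0)
        have hzz : z / (φ (φ z) + z) * (φ (φ z) + z) = z := by field_simp
        refine ⟨_, _, ⟨⟨hw, ?_⟩, htK, ht0⟩, hzz⟩
        rw [← hcond _ _ hw htK ht0, hzz]
        exact h
      · rintro ⟨w, t, ⟨⟨hw, hw'⟩, ht, ht0⟩, rfl⟩
        exact (hcond w t hw ht ht0).2 hw'
  have hrec : ∀ w t, w ∈ W → t ∈ K → φ (φ (w * t)) + w * t = t := by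
    intro w t hw ht
    rw [map_mul, map_mul, hw.1, (hK t).1 ht]
    linear_combination w * t * (CharTwo.two_eq_zero : (2 : E) = 0)
  have hdisj : Disjoint K ((fun p : E × E => p.1 * p.2) '' (W ×ˢ (K \ {0}))) := by
    rw [Set.disjoint_left]
    rintro _ hz ⟨⟨w, t⟩, ⟨hw, ht, ht0⟩, rfl⟩
    have := hrec w t hw ht
    rw [(hK _).1 hz, CharTwo.add_self_eq_zero] at this
    exact ht0 this.symm
  have hinj : Set.InjOn (fun p : E × E => p.1 * p.2) (W ×ˢ (K \ {0})) := by
    rintro ⟨w, t⟩ ⟨hw, ht, ht0⟩ ⟨w', t'⟩ ⟨hw', ht', ht0'⟩ h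
    have e1 := hrec w t hw ht
    have e2 := hrec w' t' hw' ht'
    simp only at h
    rw [h, e2] at e1
    subst e1
    have := mul_right_cancel₀ ht0' h
    rw [this]
  rw [hset, Set.ncard_union_eq hdisj, hinj.ncard_image, Set.ncard_prod,
    Set.ncard_sdiff_singleton_of_mem ((hK 0).2 (by simp)), hKc]
  congr 2

end helpers

/-- For q = 2^s (s ≥ 2), r = q⁴ and nonzero β ∈ GF(r), the number of
x ∈ GF(r) with Tr_{r/q}(β x^{q²−1}) = 0 equals q² if β is a (q+1)-th power in GF(r)^*,
and q³ + q² − q otherwise. -/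
theorem count_zeros_of_trace_beta_x_pow {q s : ℕ} (hs : 2 ≤ s) (hq : q = 2 ^ s)
    (F E : Type) [Field F] [Fintype F] [Field E] [Fintype E] [Algebra F E]
    (hF : Fintype.card F = q) (hE : Fintype.card E = q ^ 4)
    (β : E) (hβ : β ≠ 0) :
    ((∃ γ : E, γ ≠ 0 ∧ β = γ ^ (q + 1)) →
      {x : E | Algebra.trace F E (β * x ^ (q ^ 2 - 1)) = 0}.ncard = q ^ 2) ∧
    (¬(∃ γ : E, γ ≠ 0 ∧ β = γ ^ (q + 1)) →
      {x : E | Algebra.trace F E (β * x ^ (q ^ 2 - 1)) = 0}.ncard = q ^ 3 + q ^ 2 - q) := by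
  have : Fact (Nat.Prime 2) := ⟨Nat.prime_two⟩
  have hE' : Fintype.card E = 2 ^ (s * 4) := by rw [hE, hq, ← pow_mul]
  have : CharP E 2 := charP_of_card_eq_prime_pow hE'
  have hq1 : 1 < q := by rw [hq]; exact Nat.one_lt_two_pow (by omega)
  have hq2 : 1 < q ^ 2 := Nat.one_lt_pow (by norm_num) hq1
  let φ : E →+* E := iterateFrobenius E 2 s
  have hφ : ∀ x, φ x = x ^ q := fun x => by simp only [φ, iterateFrobenius_def, hq]
  have hφ2 : ∀ x, φ (φ x) = x ^ q ^ 2 := fun x => by rw [hφ, hφ, ← pow_mul, sq]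
  have hφ4 : ∀ x, φ (φ (φ (φ x))) = x := fun x => by
    rw [hφ2, hφ2, ← pow_mul, ← pow_add, ← hE, FiniteField.pow_card]
  have hroots : ∀ n : ℕ, 1 < n → {x : E | x ^ n = x}.ncard ≤ n := by
    intro n hn
    classical
    have h0 : (Polynomial.X ^ n - Polynomial.X : Polynomial E) ≠ 0 :=
      FiniteField.X_pow_card_sub_X_ne_zero E hn
    have hsub : {x : E | x ^ n = x} ⊆
        ((Polynomial.X ^ n - Polynomial.X : Polynomial E).roots.toFinset : Set E) := by
      intro x hx
      have hx' : x ^ n = x := hx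
      simp [h0, hx', Polynomial.IsRoot]
    refine (Set.ncard_le_ncard hsub).trans ?_
    rw [Set.ncard_coe_finset]
    refine (Multiset.toFinset_card_le _).trans ((Polynomial.card_roots' _).trans ?_)
    rw [FiniteField.X_pow_card_sub_X_natDegree_eq E hn]
  have hk1set : ((auxD φ).ker : Set E) = {x : E | x ^ q = x} := by
    ext x
    rw [SetLike.mem_coe, mem_ker_auxD, hφ]; rfl
  have hk2set : ((auxD (φ.comp φ)).ker : Set E) = {x : E | x ^ q ^ 2 = x} := by
    ext x
    rw [SetLike.mem_coe, mem_ker_auxD, RingHom.comp_apply, hφ2]; rfl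
  have hk1 : Nat.card (auxD φ).ker = q := by
    change ((auxD φ).ker : Set E).ncard = q
    refine le_antisymm (hk1set ▸ hroots q hq1) ?_
    have hsub : Set.range (algebraMap F E) ⊆ ((auxD φ).ker : Set E) := by
      rintro _ ⟨c, rfl⟩
      rw [SetLike.mem_coe, mem_ker_auxD, hφ, ← map_pow, ← hF, FiniteField.pow_card]
    refine le_trans ?_ (Set.ncard_le_ncard hsub)
    rw [← Set.image_univ, Set.ncard_image_of_injective _ (algebraMap F E).injective,
      Set.ncard_univ, Nat.card_eq_fintype_card, hF]
  have hk2le : Nat.card (auxD (φ.comp φ)).ker ≤ q ^ 2 := by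
    change ((auxD (φ.comp φ)).ker : Set E).ncard ≤ q ^ 2
    exact hk2set ▸ hroots (q ^ 2) hq2
  have hEc : Nat.card E = q ^ 4 := by rw [Nat.card_eq_fintype_card, hE]
  have hk2 := (exact_of_card (φ.comp φ) (q ^ 2) hφ4 (by rw [hEc]; ring) hk2le).1
  -- the trace
  have hfin : Module.finrank F E = 4 := by
    have h := Module.card_eq_pow_finrank (K := F) (V := E)
    rw [hF, hE] at h
    exact (Nat.pow_right_injective hq1 h).symm
  let T : E → E := fun y => algebraMap F E (Algebra.trace F E y)
  have hT : ∀ y, T y = y + φ y + φ (φ y) + φ (φ (φ y)) := by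
    intro y
    simp only [T]
    rw [FiniteField.algebraMap_trace_eq_sum_pow, hfin, Nat.card_eq_fintype_card, hF]
    simp only [Finset.sum_range_succ, Finset.sum_range_zero, hφ]
    simp only [← pow_mul]
    ring_nf
  -- square roots
  have hsqrt : ∀ x : E, ∃ y : E, x = y ^ 2 := by
    intro x
    obtain ⟨y, hy⟩ := (bijective_frobenius E 2).2 x
    exact ⟨y, by rw [← hy, frobenius_def]⟩
  have hsqinj : ∀ x y : E, x ^ 2 = y ^ 2 → x = y := fun x y h =>
    (frobenius_inj E 2) (by simpa [frobenius_def] using h)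
  obtain ⟨δ, hδ⟩ := hsqrt β
  have hδ0 : δ ≠ 0 := by rintro rfl; simp [hδ] at hβ
  let a : E := δ * φ (φ δ)
  have ha0 : a ≠ 0 := mul_ne_zero hδ0 (by simpa using hδ0)
  have ha : φ (φ a) = a := by simp only [a, map_mul, hφ4]; ring
  have hpow : (∃ γ : E, γ ≠ 0 ∧ β = γ ^ (q + 1)) ↔ φ a = a := by
    constructor
    · rintro ⟨γ, -, hγ⟩
      obtain ⟨g, rfl⟩ := hsqrt γ
      have : δ = φ g * g := by
        apply hsqinj
        rw [← hδ, hγ, hφ]; ring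
      simp only [a, this, map_mul, hφ4]
      ring
    · intro h
      obtain ⟨c, hc⟩ := hsqrt a
      have hc1 : φ c = c := by
        apply hsqinj
        rw [← map_pow, ← hc, h]
      have hc0 : c ≠ 0 := by rintro rfl; simp [hc] at ha0
      have hpδ : φ δ ≠ 0 := by simpa using hδ0
      have hpδ2 : φ (φ δ) ≠ 0 := by simpa using hδ0
      refine ⟨c * (δ / φ δ), by positivity, ?_⟩
      rw [pow_succ, ← hφ, map_mul, hc1, map_div₀, hδ]
      have hc' : δ * φ (φ δ) = c ^ 2 := hc
      field_simp
      linear_combination hc'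
  have hcount : ∀ m, {w : E | φ (φ w) = w + 1 ∧ φ a * (w ^ 2 + w) = a * φ (w ^ 2 + w)}.ncard = m →
      {x : E | Algebra.trace F E (β * x ^ (q ^ 2 - 1)) = 0}.ncard = q ^ 2 + m * (q ^ 2 - 1) := by
    intro m hm
    rw [← count_z φ (q ^ 2) m hk2 hφ4 a ha0 ha hm T hT]
    have hiff : ∀ z, Algebra.trace F E (β * (δ * z) ^ (q ^ 2 - 1)) = 0 ↔
        T (a * (φ (φ z) / z)) = 0 := by
      intro z
      have e : β * (δ * z) ^ (q ^ 2 - 1) = a * (φ (φ z) / z) := by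
        have hp : ∀ x : E, φ (φ x) = x ^ (q ^ 2 - 1) * x := fun x => by
          rw [hφ2, ← pow_succ, Nat.sub_add_cancel hq2.le]
        by_cases hz : z = 0
        · subst hz
          simp; right; omega
        · simp only [a]
          rw [hp z, hp δ, hδ, mul_pow]
          field_simp
      rw [e]
      simp only [T]
      exact (map_eq_zero (algebraMap F E)).symm
    symm
    refine Set.ncard_congr (fun z _ => δ * z) ?_ ?_ ?_
    · intro z hz
      exact (hiff z).2 hz
    · intro z z' _ _ h
      exact mul_left_cancel₀ hδ0 h
    · intro x hx
      have hxx : δ * (x / δ) = x := by field_simp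
      refine ⟨x / δ, ?_, hxx⟩
      refine (hiff _).1 ?_
      rw [hxx]
      exact hx
  constructor
  · intro h
    rw [hcount 0 (count_w_zero φ a ha0 (hpow.1 h))]
    simp
  · intro h
    rw [hcount q (count_w φ q hφ4 hEc hk1 hk2le a ha (fun h' => h (hpow.2 h')))]
    have h3 : q ≤ q ^ 3 := Nat.le_self_pow (by norm_num) q
    have h4 : q * q ^ 2 = q ^ 3 := by ring
    rw [Nat.mul_sub, mul_one, h4]
    omega
end

section
/- Let q = 2^s with s ≥ 2, r = q⁴, and N = q²−1, so that n = (r−1)/N = q²+1. Then the irreducible cyclic code C(r,N) over GF(q) is a linear code with parameters [q²+1, 4, q²−q]; in particular the GF(q)-linear map β ↦ c(β) = (Tr_{r/q}(β), Tr_{r/q}(βθ), …, Tr_{r/q}(βθ^{n−1})) from GF(r) to GF(q)^{q²+1} is injective, so the code has q⁴ codewords, and the minimum Hamming weight of a nonzero codeword is q²−q. -/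
open Finset Polynomial in
theorem fix_bound {E : Type} [Field E] [Fintype E] [DecidableEq E] (q : ℕ) (hq : 1 < q) :
    #{t : E | t ^ q = t} ≤ q := by
  have h0 : (X ^ q - X : E[X]) ≠ 0 := FiniteField.X_pow_card_sub_X_ne_zero E hq
  have hd : (X ^ q - X : E[X]).natDegree = q := FiniteField.X_pow_card_sub_X_natDegree_eq E hq
  calc #{t : E | t ^ q = t} ≤ #(X ^ q - X : E[X]).roots.toFinset := by
        apply card_le_card
        intro t ht
        simp only [mem_filter, mem_univ, true_and] at ht
        simp [h0, ht]
    _ ≤ Multiset.card (X ^ q - X : E[X]).roots := Multiset.toFinset_card_le _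
    _ ≤ q := (Polynomial.card_roots' _).trans hd.le

open Finset in
theorem S_bound {E : Type} [Field E] [Fintype E] [DecidableEq E] [CharP E 2] (q s : ℕ)
    (hq : q = 2 ^ s) (hs : 2 ≤ s) (a : E) (ha : a ≠ 0) :
    #{y : E | y ^ (q ^ 2) + y = 1 ∧ ((y ^ 2 + y) / a) ^ q = (y ^ 2 + y) / a} ≤ q := by
  have h2 : (2 : E) = 0 := CharTwo.two_eq_zero
  have hq1 : 1 < q := by rw [hq]; exact Nat.one_lt_two_pow (by omega)
  set S : Finset E := {y : E | y ^ (q ^ 2) + y = 1 ∧ ((y ^ 2 + y) / a) ^ q = (y ^ 2 + y) / a} with hS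
  set G : Finset E := {y : E | ((y ^ 2 + y) / a) ^ q = (y ^ 2 + y) / a} with hG
  have addq : ∀ x y : E, (x + y) ^ q = x ^ q + y ^ q := by
    intro x y; rw [hq]; exact add_pow_char_pow x y 2 s
  have addQ : ∀ x y : E, (x + y) ^ (q ^ 2) = x ^ (q ^ 2) + y ^ (q ^ 2) := by
    intro x y; rw [hq, ← pow_mul]; exact add_pow_char_pow x y 2 _
  have hGc : #G ≤ 2 * q := by
    have h := card_le_mul_card_image_of_maps_to (s := G) (t := {t : E | t ^ q = t})
      (f := fun y => (y ^ 2 + y) / a) (by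
        intro y hy
        simpa [hG] using hy) 2 (by
        intro b hb
        rcases (G.filter (fun y => (y ^ 2 + y) / a = b)).eq_empty_or_nonempty with h | ⟨y0, h0⟩
        · rw [h]; simp
        · refine (card_le_card (t := {y0, y0 + 1}) ?_).trans card_le_two
          intro y hy
          simp only [mem_filter] at hy h0
          have h3 := hy.2.trans h0.2.symm
          rw [div_left_inj' ha] at h3
          have h4 : (y - y0) * (y - (y0 + 1)) = 0 := by
            linear_combination h3 + (y0 ^ 2 + y0 - y - y * y0) * h2
          rcases mul_eq_zero.1 h4 with h | h
          · simp [sub_eq_zero.1 h]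
          · simp [sub_eq_zero.1 h])
    exact h.trans (Nat.mul_le_mul_left _ (fix_bound q hq1))
  rcases S.eq_empty_or_nonempty with h | ⟨y0, h0⟩
  · rw [h]; simp
  have h0' := h0
  simp only [hS, mem_filter, mem_univ, true_and] at h0'
  have hdis : Disjoint S (S.image (· + y0)) := by
    rw [disjoint_left]
    intro y hy hy'
    simp only [hS, mem_filter, mem_univ, true_and, mem_image] at hy hy'
    obtain ⟨z, hz, rfl⟩ := hy'
    have := hy.1
    rw [addQ] at this
    have h1 : (1 : E) = 0 := by linear_combination this - hz.1 - h0'.1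
    exact one_ne_zero h1
  have hsub : S ∪ S.image (· + y0) ⊆ G := by
    intro y hy
    rcases mem_union.1 hy with hy | hy
    · simp only [hS, hG, mem_filter, mem_univ, true_and] at hy ⊢
      exact hy.2
    · obtain ⟨z, hz, rfl⟩ := mem_image.1 hy
      simp only [hS, hG, mem_filter, mem_univ, true_and] at hz ⊢
      have : ((z + y0) ^ 2 + (z + y0)) / a = (z ^ 2 + z) / a + (y0 ^ 2 + y0) / a := by
        rw [← add_div]; congr 1; linear_combination z * y0 * h2
      rw [this, addq, hz.2, h0'.2]
  have := (card_le_card hsub).trans hGc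
  rw [card_union_of_disjoint hdis, card_image_of_injective _ (add_left_injective y0)] at this
  omega

open Finset in
theorem U_bound {E : Type} [Field E] [Fintype E] [DecidableEq E] [CharP E 2] (q s : ℕ)
    (hq : q = 2 ^ s) (hs : 2 ≤ s) (a : E) (ha : a ≠ 0) :
    #{w : E | w ^ (q ^ 2 + 1) = 1 ∧ (a * (w + w⁻¹)) ^ q = a * (w + w⁻¹)} ≤ q + 1 := by
  have h2 : (2 : E) = 0 := CharTwo.two_eq_zero
  have addQ : ∀ x y : E, (x + y) ^ (q ^ 2) = x ^ (q ^ 2) + y ^ (q ^ 2) := by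
    intro x y; rw [hq, ← pow_mul]; exact add_pow_char_pow x y 2 _
  set W : Finset E := {w : E | w ^ (q ^ 2 + 1) = 1 ∧ (a * (w + w⁻¹)) ^ q = a * (w + w⁻¹)} with hW
  have key : #(W.erase 1) ≤ q := by
    refine le_trans ?_ (S_bound q s hq hs a ha)
    have ne : ∀ w : E, w ≠ 1 → w + 1 ≠ 0 := by
      intro w hw h
      exact hw (by linear_combination h - h2)
    apply card_le_card_of_injOn (fun w => w / (w + 1))
    · intro w hw
      have hw := mem_erase.1 (mem_coe.1 hw)
      simp only [hW, mem_filter, mem_univ, true_and] at hw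
      obtain ⟨h1, hU, hf⟩ := hw
      have hw1 := ne w h1
      have hw0 : w ≠ 0 := by rintro rfl; simp at hU
      have hQ : w ^ (q ^ 2) = w⁻¹ := by
        rw [pow_succ] at hU; exact eq_inv_of_mul_eq_one_left hU
      simp only [coe_filter, mem_univ, true_and, Set.mem_ofPred_eq]
      have hw2 : w⁻¹ + 1 ≠ 0 := by
        intro h; apply hw1; field_simp at h; linear_combination h
      have hw3 : 1 + w ≠ 0 := by rwa [add_comm]
      constructor
      · rw [div_pow, addQ, hQ, one_pow]
        field_simp
        ring
      · have e : ((w / (w + 1)) ^ 2 + w / (w + 1)) / a = (a * (w + w⁻¹))⁻¹ := by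
          have hz : w + w⁻¹ = (w + 1) ^ 2 / w := by
            field_simp; linear_combination -w * h2
          rw [hz]
          field_simp
          linear_combination w * h2
        rw [e, inv_pow, hf]
    · intro x hx y hy hxy
      have hx1 := ne x (mem_erase.1 (mem_coe.1 hx)).1
      have hy1 := ne y (mem_erase.1 (mem_coe.1 hy)).1
      simp only at hxy
      rw [div_eq_div_iff hx1 hy1] at hxy
      linear_combination hxy
  have := pred_card_le_card_erase (s := W) (a := 1)
  omega

open Finset in
theorem zero_bound {q s : ℕ} (hs : 2 ≤ s) (hq : q = 2 ^ s)
    (F E : Type) [Field F] [Fintype F] [DecidableEq F] [Field E] [Fintype E] [Algebra F E]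
    [CharP E 2]
    (hF : Fintype.card F = q) (hE : Fintype.card E = q ^ 4) (hfr : Module.finrank F E = 4)
    (θ : E) (hθ : θ ^ (q ^ 2 + 1) = 1) (hinj : ∀ i j : Fin (q ^ 2 + 1),
      θ ^ (i : ℕ) = θ ^ (j : ℕ) → i = j) (β : E) (hβ : β ≠ 0) :
    #{j : Fin (q ^ 2 + 1) | Algebra.trace F E (β * θ ^ (j : ℕ)) = 0} ≤ q + 1 := by
  classical
  have h2 : (2 : E) = 0 := CharTwo.two_eq_zero
  have addq : ∀ x y : E, (x + y) ^ q = x ^ q + y ^ q := by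
    intro x y; rw [hq]; exact add_pow_char_pow x y 2 s
  have hr : ∀ x : E, x ^ (q ^ 4) = x := fun x => hE ▸ FiniteField.pow_card x
  obtain ⟨a, haa⟩ := FiniteField.isSquare_of_char_two (ringChar.eq E 2) (β ^ (q ^ 2 + 1))
  have ha : a ≠ 0 := by
    rintro rfl
    exact pow_ne_zero (q ^ 2 + 1) hβ (by simpa using haa)
  have haQ : a ^ (q ^ 2) = a := by
    have h1 : (a ^ (q ^ 2)) ^ 2 = a ^ 2 := by
      rw [← pow_mul, mul_comm, pow_mul, sq a, ← haa, ← pow_mul]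
      have : (q ^ 2 + 1) * q ^ 2 = q ^ 4 + q ^ 2 := by ring
      rw [this, pow_add, hr]; ring
    have h3 : (a ^ (q ^ 2) - a) ^ 2 = 0 := by
      linear_combination h1 + (a ^ 2 - a ^ (q ^ 2) * a) * h2
    exact sub_eq_zero.1 (pow_eq_zero_iff (two_ne_zero)|>.1 h3)
  set v := β / a with hv
  have hvU : v ^ (q ^ 2 + 1) = 1 := by
    rw [hv, div_pow, haa, pow_succ, haQ]
    field_simp
  have hv0 : v ≠ 0 := div_ne_zero hβ ha
  have hβv : β = a * v := by rw [hv]; field_simp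
  refine le_trans ?_ (U_bound q s hq hs a ha)
  apply card_le_card_of_injOn (fun j : Fin (q ^ 2 + 1) => v * θ ^ (j : ℕ))
  · intro j hj
    simp only [coe_filter, mem_univ, true_and, Set.mem_ofPred_eq] at hj ⊢
    set w := v * θ ^ (j : ℕ) with hw
    have hwU : w ^ (q ^ 2 + 1) = 1 := by
      rw [hw, mul_pow, hvU, one_mul, ← pow_mul, mul_comm, pow_mul, hθ, one_pow]
    refine ⟨hwU, ?_⟩
    have hQ : w ^ (q ^ 2) = w⁻¹ := by
      rw [pow_succ] at hwU; exact eq_inv_of_mul_eq_one_left hwU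
    have ht := FiniteField.algebraMap_trace_eq_sum_pow F E (β * θ ^ (j : ℕ))
    rw [hj, map_zero, hfr, Nat.card_eq_fintype_card, hF, hβv, mul_assoc, ← hw] at ht
    simp only [sum_range_succ, range_zero, sum_empty, pow_zero, pow_one, zero_add] at ht
    have e3 : (a * w) ^ (q ^ 3) = (a * w⁻¹) ^ q := by
      rw [show q ^ 3 = q ^ 2 * q by ring, pow_mul, mul_pow a w, haQ, hQ]
    have e2 : (a * w) ^ (q ^ 2) = a * w⁻¹ := by rw [mul_pow a w, haQ, hQ]
    rw [e3, e2] at ht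
    rw [mul_add, addq]
    linear_combination -ht - (a * w + a * w⁻¹) * h2
  · intro i _ j _ hij
    exact hinj i j (mul_left_cancel₀ hv0 hij)

/-- For q = 2^s (s ≥ 2), r = q⁴, N = q²−1, n = q²+1, the irreducible
cyclic code C(r,N) = { c(β) = (Tr(βθ^j))_{0 ≤ j ≤ n−1} : β ∈ GF(r) } over GF(q), where
θ = α^N for a primitive element α of GF(r), is a [q²+1, 4, q²−q] linear code: the map
β ↦ c(β) is injective (so there are q⁴ codewords, and the code has dimension 4), and
the minimum Hamming weight of a nonzero codeword is q²−q. -/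
theorem irreducible_cyclic_code_is_ovoid_code {q s : ℕ} (hs : 2 ≤ s) (hq : q = 2 ^ s)
    (F E : Type) [Field F] [Fintype F] [DecidableEq F] [Field E] [Fintype E] [Algebra F E]
    (hF : Fintype.card F = q) (hE : Fintype.card E = q ^ 4)
    (α : Eˣ) (hα : ∀ x : Eˣ, x ∈ Subgroup.zpowers α) :
    let cw : E → (Fin (q ^ 2 + 1) → F) := fun β j =>
      Algebra.trace F E (β * (((α : E) ^ (q ^ 2 - 1)) ^ (j : ℕ)))
    Function.Injective cw ∧
    (Set.range cw).ncard = q ^ 4 ∧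
    Module.finrank F (Submodule.span F (Set.range cw)) = 4 ∧
    (∀ β : E, β ≠ 0 → q ^ 2 - q ≤ hammingNorm (cw β)) ∧
    (∃ β : E, β ≠ 0 ∧ hammingNorm (cw β) = q ^ 2 - q) := by
  classical
  intro cw
  have hq4 : 4 ≤ q := by
    rw [hq]; exact (Nat.pow_le_pow_right (by norm_num) hs : 2 ^ 2 ≤ 2 ^ s)
  have hfr : Module.finrank F E = 4 := by
    have h := Module.card_eq_pow_finrank (K := F) (V := E)
    rw [hE, hF] at h
    exact (Nat.pow_right_injective (by omega : 2 ≤ q) h).symm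
  have hchar : CharP E 2 := by
    apply charP_of_card_eq_prime_pow (f := s * 4)
    rw [hE, hq, pow_mul]
  set θ : E := (α : E) ^ (q ^ 2 - 1) with hθdef
  have hq2 : 1 < q ^ 2 := by nlinarith
  have hordα : orderOf (α : E) = (q ^ 2 - 1) * (q ^ 2 + 1) := by
    rw [orderOf_units, orderOf_eq_card_of_forall_mem_zpowers hα, Nat.card_units,
      Nat.card_eq_fintype_card, hE]
    zify [hq2.le, Nat.one_le_pow 4 q (by omega)]
    ring
  have hord : orderOf θ = q ^ 2 + 1 := by
    rw [hθdef, orderOf_pow_of_dvd (by omega) (by rw [hordα]; exact dvd_mul_right _ _), hordα]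
    exact Nat.mul_div_cancel_left _ (by omega)
  have hθ : θ ^ (q ^ 2 + 1) = 1 := hord ▸ pow_orderOf_eq_one θ
  have hθ0 : θ ≠ 0 := pow_ne_zero _ α.ne_zero
  have hinj : ∀ i j : Fin (q ^ 2 + 1), θ ^ (i : ℕ) = θ ^ (j : ℕ) → i = j := by
    intro i j h
    exact Fin.ext (pow_injOn_Iio_orderOf (by rw [hord]; exact i.2) (by rw [hord]; exact j.2) h)
  have hZ : ∀ β : E, β ≠ 0 → (Finset.univ.filter (fun j => cw β j = 0)).card ≤ q + 1 :=
    fun β hβ => zero_bound hs hq F E hF hE hfr θ hθ hinj β hβ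
  have hnorm : ∀ β : E, (Finset.univ.filter (fun j => cw β j = 0)).card + hammingNorm (cw β)
      = q ^ 2 + 1 := by
    intro β
    have := Finset.card_filter_add_card_filter_not (s := Finset.univ) (fun j => cw β j = 0)
    simpa [hammingNorm] using this
  have hqq : q + 1 < q ^ 2 + 1 := by nlinarith
  let L : E →ₗ[F] (Fin (q ^ 2 + 1) → F) :=
    LinearMap.pi fun j => (Algebra.trace F E).comp (LinearMap.mulRight F (θ ^ (j : ℕ)))
  have hL : cw = L := rfl
  have hLinj : Function.Injective cw := by
    rw [hL, injective_iff_map_eq_zero]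
    intro β h
    by_contra hβ
    have h1 := hZ β hβ
    have h2 := hnorm β
    have h3 : hammingNorm (cw β) = 0 := by rw [hL, h]; simp
    omega
  have hlow : ∀ β : E, β ≠ 0 → q ^ 2 - q ≤ hammingNorm (cw β) := by
    intro β hβ
    have h1 := hZ β hβ
    have h2 := hnorm β
    omega
  refine ⟨hLinj, ?_, ?_, hlow, ?_⟩
  · rw [← Set.image_univ, Set.ncard_image_of_injective _ hLinj, Set.ncard_univ,
      Nat.card_eq_fintype_card, hE]
  · have : Submodule.span F (Set.range cw) = LinearMap.range L := by
      rw [hL, ← LinearMap.coe_range, Submodule.span_eq]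
    rw [this, LinearMap.finrank_range_of_inj hLinj, hfr]
  · by_contra! hno
    have hle : ∀ β : E, β ≠ 0 → (Finset.univ.filter (fun j => cw β j = 0)).card ≤ q := by
      intro β hβ
      have h1 := hlow β hβ
      have h2 := hnorm β
      have h3 := hno β hβ
      omega
    have hker : ∀ j, (Finset.univ.filter (fun β : E => cw β j = 0)).card = q ^ 3 := by
      intro j
      let M : E →ₗ[F] F := (Algebra.trace F E).comp (LinearMap.mulRight F (θ ^ (j : ℕ)))
      have hM : LinearMap.range M = ⊤ := by
        rw [LinearMap.range_eq_top]
        exact (Algebra.trace_surjective F E).comp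
          (mul_right_surjective₀ (pow_ne_zero _ hθ0))
      have h1 := LinearMap.finrank_range_add_finrank_ker M
      rw [hM, finrank_top, Module.finrank_self, hfr] at h1
      have h2 := Module.card_eq_pow_finrank (K := F) (V := LinearMap.ker M)
      rw [hF, show Module.finrank F (LinearMap.ker M) = 3 by omega] at h2
      rw [← h2, Fintype.card_subtype]
      congr 1
      ext β
      simp only [Finset.mem_filter, Finset.mem_univ, true_and, LinearMap.mem_ker]
      exact Iff.rfl
    have hdc := Finset.sum_card_bipartiteAbove_eq_sum_card_bipartiteBelow
      (s := (Finset.univ : Finset E)) (t := (Finset.univ : Finset (Fin (q ^ 2 + 1))))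
      (fun β j => cw β j = 0)
    simp only [Finset.bipartiteAbove, Finset.bipartiteBelow, hker] at hdc
    rw [← Finset.add_sum_erase _ _ (Finset.mem_univ (0 : E))] at hdc
    have hs1 := Finset.sum_le_card_nsmul (Finset.univ.erase (0 : E))
      (fun β => (Finset.univ.filter (fun j => cw β j = 0)).card) q
      (fun β hβ => hle β (Finset.ne_of_mem_erase hβ))
    have hs0 : (Finset.univ.filter (fun j => cw 0 j = 0)).card ≤ q ^ 2 + 1 := by
      have := hnorm 0; omega
    rw [Finset.card_erase_of_mem (Finset.mem_univ _), Finset.card_univ, hE, smul_eq_mul] at hs1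
    simp only [Finset.sum_const, Finset.card_univ, Fintype.card_fin, smul_eq_mul] at hdc
    have h5 : (q ^ 4 - 1) * q + q = q ^ 5 := by
      rw [← Nat.succ_mul, Nat.succ_eq_add_one, Nat.sub_add_cancel (Nat.one_le_pow _ _ (by omega))]
      ring
    have h6 : (q ^ 2 + 1) * q ^ 3 = q ^ 5 + q ^ 3 := by ring
    have h7 : 4 * q ^ 2 ≤ q ^ 3 := by
      rw [pow_succ q 2, mul_comm]; exact Nat.mul_le_mul_left _ hq4
    rw [h6] at hdc
    omega
end

section
/- Let q = 2^s with s ≥ 2, r = q⁴, and N = q²−1, so that n = (r−1)/N = q²+1. In the irreducible cyclic code C(r,N) over GF(q), every nonzero codeword has Hamming weight q²−q or q²; more precisely, for nonzero β ∈ GF(r), the codeword c(β) has weight q² if β is a (q+1)-th power in GF(r)^* and weight q²−q otherwise, and the code has exactly (q²−q)(q²+1) codewords of weight q²−q and exactly (q−1)(q²+1) codewords of weight q². -/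
section aux
variable {F E : Type} [Field F] [Fintype F] [Field E] [Fintype E] [Algebra F E]

theorem aux_fix (x : E) (hx : x ^ Fintype.card F = x) : ∃ a : F, algebraMap F E a = x := by
  have := (IsGalois.mem_range_algebraMap_iff_fixed (F := F) (E := E) x).2 (by
    intro f
    obtain ⟨n, rfl⟩ := (FiniteField.bijective_frobeniusAlgEquivOfAlgebraic_pow F E).2 f
    simp only [AlgEquiv.coe_pow, FiniteField.coe_frobeniusAlgEquivOfAlgebraic]
    generalize (n : ℕ) = m
    apply Function.iterate_fixed
    exact hx)
  exact this

theorem aux_one [CharP E 2] (φ : E →ₐ[F] E) (h4 : ∀ x, φ (φ (φ (φ x))) = x)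
    (htr : ∀ x, algebraMap F E (Algebra.trace F E x) = x + φ x + φ (φ x) + φ (φ (φ x)))
    (x : E) (hx : φ (φ x) * x = 1) (h0 : Algebra.trace F E x = 0) : x = 1 := by
  have ht := htr x
  rw [h0, map_zero] at ht
  have hx' : φ (φ (φ x)) * φ x = 1 := by rw [← map_mul, hx, map_one]
  have key : φ (φ x) = x := by
    have h2 : (2 : E) = 0 := CharTwo.two_eq_zero
    have : (φ x - x) * (φ x - φ (φ x)) = 0 := by
      linear_combination (-φ x) * ht + hx + hx' + h2 * ((φ x)^2 -1) + h2 * (φ x * φ (φ x) - φ x ^2) +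
        h2 * (2 - φ x * x - 2 * (φ x * φ (φ x)) - φ x * φ (φ (φ x)))
    rcases mul_eq_zero.1 this with h | h
    · have h := sub_eq_zero.1 h
      rw [h, h]
    · have h := φ.injective (sub_eq_zero.1 h)
      rw [← h, ← h]
  rw [key, ← sq] at hx
  have : (x + 1) ^ 2 = 0 := by rw [CharTwo.add_sq, hx]; simp [CharTwo.add_self_eq_zero]
  have := pow_eq_zero_iff (two_ne_zero) |>.1 this
  exact CharTwo.add_eq_zero.1 this

theorem aux_nondeg (c : E) (h : ∀ v : E, Algebra.trace F E (c * v) = 0) : c = 0 := by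
  have := (traceForm_nondegenerate F E).1 c
  exact this h

theorem aux_card [DecidableEq F] (b : E) (hb : ¬ ∃ a : F, algebraMap F E a = b)
    (hE : Fintype.card E = Fintype.card F ^ 4) :
    Fintype.card {v : E // Algebra.trace F E (b * v) = 0 ∧ Algebra.trace F E v = 1}
      = Fintype.card F ^ 2 := by
  classical
  let L : E →ₗ[F] F × F :=
    LinearMap.prod ((Algebra.trace F E).comp (LinearMap.mulLeft F b)) (Algebra.trace F E)
  have hL : ∀ v, L v = (Algebra.trace F E (b * v), Algebra.trace F E v) := fun v => rfl
  have h1 : ∃ v, Algebra.trace F E (b * v) = 0 ∧ Algebra.trace F E v ≠ 0 := by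
    by_contra! hcon
    have := mem_span_of_iInf_ker_le_ker (ι := Unit) (𝕜 := F)
      (L := fun _ => (Algebra.trace F E).comp (LinearMap.mulLeft F b))
      (K := Algebra.trace F E) (by
        simp only [ciInf_unique]
        intro v hv
        exact hcon v hv)
    rw [Set.range_const, Submodule.mem_span_singleton] at this
    obtain ⟨c, hc⟩ := this
    have := aux_nondeg (F := F) (algebraMap F E c * b - 1) (by
      intro v
      have := LinearMap.congr_fun hc v
      simp at this
      rw [sub_mul, one_mul, map_sub, mul_assoc, ← Algebra.smul_def, map_smul, smul_eq_mul, this,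
        sub_self])
    have h1 : algebraMap F E c * b = 1 := sub_eq_zero.1 this
    have hc0 : algebraMap F E c ≠ 0 := left_ne_zero_of_mul_eq_one h1
    exact hb ⟨c⁻¹, by rw [map_inv₀]; exact inv_eq_of_mul_eq_one_right h1⟩
  obtain ⟨v, hv0, hv1⟩ := h1
  have hb0 : b ≠ 0 := fun h => hb ⟨0, by simp [h]⟩
  have h2 : ∃ u, Algebra.trace F E (b * u) ≠ 0 := by
    by_contra! hcon
    exact hb0 (aux_nondeg b hcon)
  obtain ⟨u, hu⟩ := h2
  have hsurj : Function.Surjective L := by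
    rintro ⟨x, y⟩
    refine ⟨(x / Algebra.trace F E (b * u)) • u +
      ((y - x / Algebra.trace F E (b * u) * Algebra.trace F E u) / Algebra.trace F E v) • v, ?_⟩
    simp only [hL, mul_add, map_add, mul_smul_comm, map_smul, smul_eq_mul, hv0]
    ext
    · simp; field_simp
    · simp; field_simp; ring
  have hfib : ∀ y : F × F, (Finset.univ.filter fun g => L g = y).card =
      (Finset.univ.filter fun g => L g = (0, 1)).card := fun y =>
    AddMonoidHom.card_fiber_eq_of_mem_range L (hsurj _) (hsurj _)
  have := Finset.card_eq_sum_card_fiberwise (s := (Finset.univ : Finset E)) (f := L)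
    (t := Finset.univ) (by simp)
  simp only [hfib, Finset.sum_const, Finset.card_univ, hE, Fintype.card_prod, smul_eq_mul] at this
  rw [Fintype.card_subtype]
  have hq : 0 < Fintype.card F := Fintype.card_pos
  have e : (Finset.univ.filter fun g => L g = (0, 1)) = Finset.univ.filter fun v : E =>
    Algebra.trace F E (b * v) = 0 ∧ Algebra.trace F E v = 1 := by
    ext; simp [hL]
  rw [e] at this
  have h3 : 0 < Fintype.card F * Fintype.card F := by positivity
  apply Nat.eq_of_mul_eq_mul_left h3
  rw [← this]; ring

theorem aux_B [DecidableEq F] [DecidableEq E] [CharP E 2] (φ : E →ₐ[F] E)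
    (h4 : ∀ x, φ (φ (φ (φ x))) = x)
    (htr : ∀ x, algebraMap F E (Algebra.trace F E x) = x + φ x + φ (φ x) + φ (φ (φ x)))
    (hfix : ∀ x, φ x = x → ∃ a : F, algebraMap F E a = x)
    (hE : Fintype.card E = Fintype.card F ^ 4)
    (b : E) (hb : ¬ ∃ a : F, algebraMap F E a = b) (hbb : φ (φ b) = b) :
    (Finset.univ.filter fun x : E => φ (φ x) * x = 1 ∧ Algebra.trace F E (b * x) = 0).card
      = Fintype.card F + 1 := by
  have h2 : (2 : E) = 0 := CharTwo.two_eq_zero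
  have inj : Function.Injective (algebraMap F E) := (algebraMap F E).injective
  have hb0 : Algebra.trace F E b = 0 := by
    apply inj
    rw [htr, hbb, map_zero]
    linear_combination h2 * (b + φ b)
  have h10 : Algebra.trace F E 1 = 0 := by
    apply inj
    rw [htr, map_zero]; simp only [map_one]
    linear_combination h2 * 2
  have : CharP F 2 := (algebraMap F E).charP inj 2
  have trs : ∀ (a : F) (x : E), Algebra.trace F E (algebraMap F E a * x) =
      a * Algebra.trace F E x := by
    intro a x; rw [← Algebra.smul_def, map_smul, smul_eq_mul]
  have tra : ∀ (a : F), Algebra.trace F E (algebraMap F E a) = 0 := by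
    intro a; have := trs a 1; rwa [mul_one, h10, mul_zero] at this
  have trb : ∀ (a : F), Algebra.trace F E (b * algebraMap F E a) = 0 := by
    intro a; rw [mul_comm, trs, hb0, mul_zero]
  have trs' : ∀ (a : F) (x : E), Algebra.trace F E (b * (algebraMap F E a * x)) =
      a * Algebra.trace F E (b * x) := by
    intro a x; rw [← trs]; congr 1; ring
  have Q : ∀ v, ∃ a : F, algebraMap F E a = φ (φ v) * v + φ (φ (φ v)) * φ v := by
    intro v; apply hfix
    simp only [map_add, map_mul, h4]; ring
  choose q hq using Q
  have ne0 : ∀ x : E, φ (φ x) * x = 1 → x ≠ 0 := fun x h => right_ne_zero_of_mul_eq_one h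
  let Z := {x : E // φ (φ x) * x = 1 ∧ Algebra.trace F E (b * x) = 0 ∧ x ≠ 1}
  have hT : ∀ x : Z, Algebra.trace F E x.1 ≠ 0 := fun x h =>
    x.2.2.2 (aux_one φ h4 htr x.1 x.2.1 h)
  have hqa : ∀ (w : E) (μ : F), q (w + algebraMap F E μ) = q w + μ * Algebra.trace F E w := by
    intro w μ; apply inj
    rw [hq, (algebraMap F E).map_add, hq, (algebraMap F E).map_mul, htr]
    simp only [map_add, AlgHom.commutes]
    linear_combination h2 * (algebraMap F E μ)^2
  have hqs : ∀ (w : E) (μ : F), q (algebraMap F E μ * w) = μ ^ 2 * q w := by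
    intro w μ; apply inj
    rw [hq, (algebraMap F E).map_mul, (algebraMap F E).map_pow, hq]
    simp only [map_mul, AlgHom.commutes]
    ring
  have hq1 : ∀ x : E, φ (φ x) * x = 1 → q x = 0 := by
    intro x hx; apply inj
    have hx' : φ (φ (φ x)) * φ x = 1 := by rw [← map_mul, hx, map_one]
    rw [hq, hx, hx', map_zero]; linear_combination h2
  let f : Z × F → {v : E // Algebra.trace F E (b * v) = 0 ∧ Algebra.trace F E v = 1} :=
    fun p => ⟨algebraMap F E (Algebra.trace F E p.1.1)⁻¹ * p.1.1 + algebraMap F E p.2, by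
      rw [mul_add, map_add, trb, trs', p.1.2.2.1]; simp, by
      rw [map_add, tra, trs, inv_mul_cancel₀ (hT p.1)]; simp⟩
  have hf : Function.Bijective f := by
    constructor
    · rintro ⟨x, μ⟩ ⟨y, ν⟩ h
      have h := congrArg Subtype.val h
      simp only [f] at h
      have h' := congrArg q h
      rw [hqa, hqa, hqs, hqs, hq1 _ x.2.1, hq1 _ y.2.1, trs, trs, inv_mul_cancel₀ (hT x),
        inv_mul_cancel₀ (hT y)] at h'
      simp at h'
      subst h'
      simp only [Prod.mk.injEq, and_true]
      have h := add_right_cancel h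
      have hx0 := hT x
      have hy0 := hT y
      set s := Algebra.trace F E x.1
      set t := Algebra.trace F E y.1
      -- squares
      have e1 := congrArg (fun w => φ (φ w) * w) h
      simp only [map_mul, AlgHom.commutes] at e1
      have e2 : (algebraMap F E s⁻¹) ^ 2 = (algebraMap F E t⁻¹) ^ 2 := by
        linear_combination e1 - (algebraMap F E s⁻¹) ^ 2 * x.2.1 +
          (algebraMap F E t⁻¹) ^ 2 * y.2.1
      have e3 : algebraMap F E s⁻¹ = algebraMap F E t⁻¹ := CharTwo.sq_injective e2
      rw [e3] at h
      have : algebraMap F E t⁻¹ ≠ 0 := by simpa using hy0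
      exact Subtype.ext (mul_left_cancel₀ this h)
    · rintro ⟨v, hv0, hv1⟩
      set w := v + algebraMap F E (q v) with hw
      have hw1 : Algebra.trace F E w = 1 := by rw [hw, map_add, tra, hv1, add_zero]
      have hw0 : Algebra.trace F E (b * w) = 0 := by rw [hw, mul_add, map_add, trb, hv0, add_zero]
      have hqw : q w = 0 := by rw [hw, hqa, hv1, mul_one, CharTwo.add_self_eq_zero]
      have hwne : w ≠ 0 := by rintro h; rw [h] at hw1; simp at hw1
      obtain ⟨n, hn⟩ := hfix (φ (φ w) * w) (by
        have := hq w
        rw [hqw, map_zero] at this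
        rw [map_mul]
        exact (CharTwo.add_eq_zero.1 this.symm).symm)
      have hn0 : n ≠ 0 := by
        rintro rfl
        rw [map_zero] at hn
        have := mul_ne_zero (a := φ (φ w)) (b := w) (by simpa using hwne) hwne
        exact this hn.symm
      obtain ⟨l, hl⟩ := (Finite.injective_iff_surjective.1 (CharTwo.sq_injective (R := F))) n
      simp only at hl
      have hl0 : l ≠ 0 := by rintro rfl; simp at hl; exact hn0 hl.symm
      have hlE : algebraMap F E l ≠ 0 := by simpa using hl0
      have hx1 : φ (φ (algebraMap F E l⁻¹ * w)) * (algebraMap F E l⁻¹ * w) = 1 := by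
        simp only [map_mul, AlgHom.commutes, map_inv₀]
        rw [← hl, map_pow] at hn
        field_simp
        rw [← hn]
      have hxt : Algebra.trace F E (algebraMap F E l⁻¹ * w) = l⁻¹ := by rw [trs, hw1, mul_one]
      refine ⟨⟨⟨algebraMap F E l⁻¹ * w, hx1, ?_, ?_⟩, q v⟩, ?_⟩
      · rw [trs', hw0, mul_zero]
      · intro h
        rw [h, h10] at hxt
        exact inv_ne_zero hl0 hxt.symm
      · apply Subtype.ext
        simp only [f, hxt, inv_inv]
        rw [map_inv₀, mul_inv_cancel_left₀ hlE, hw, add_assoc, CharTwo.add_self_eq_zero, add_zero]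
  have hc := Fintype.card_of_bijective hf
  rw [aux_card b hb hE, Fintype.card_prod, sq] at hc
  have hc := Nat.eq_of_mul_eq_mul_right Fintype.card_pos hc
  have : (Finset.univ.filter fun x : E => φ (φ x) * x = 1 ∧ Algebra.trace F E (b * x) = 0) =
    insert 1 (Finset.univ.filter fun x : E =>
      φ (φ x) * x = 1 ∧ Algebra.trace F E (b * x) = 0 ∧ x ≠ 1) := by
    ext x
    by_cases hx : x = 1
    · simp [hx, hb0]
    · simp [hx]
  rw [this, Finset.card_insert_of_notMem (by simp), ← Fintype.card_subtype]
  exact congrArg (· + 1) hc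

theorem aux_A [DecidableEq F] [DecidableEq E] [CharP E 2] (φ : E →ₐ[F] E)
    (h4 : ∀ x, φ (φ (φ (φ x))) = x)
    (htr : ∀ x, algebraMap F E (Algebra.trace F E x) = x + φ x + φ (φ x) + φ (φ (φ x)))
    (b : E) (hb0 : b ≠ 0) (hb : ∃ a : F, algebraMap F E a = b) :
    (Finset.univ.filter fun x : E => φ (φ x) * x = 1 ∧ Algebra.trace F E (b * x) = 0).card
      = 1 := by
  obtain ⟨a, rfl⟩ := hb
  have ha : a ≠ 0 := by rintro rfl; simp at hb0
  rw [Finset.card_eq_one]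
  refine ⟨1, ?_⟩
  have trs : ∀ (x : E), Algebra.trace F E (algebraMap F E a * x) =
      a * Algebra.trace F E x := by
    intro x; rw [← Algebra.smul_def, map_smul, smul_eq_mul]
  ext x
  simp only [Finset.mem_filter, Finset.mem_univ, true_and, trs, mul_eq_zero, ha, false_or,
    Finset.mem_singleton]
  constructor
  · rintro ⟨h1, h2⟩
    exact aux_one φ h4 htr x h1 h2
  · rintro rfl
    refine ⟨by simp, (algebraMap F E).injective ?_⟩
    have h2 : (2 : E) = 0 := CharTwo.two_eq_zero
    rw [htr, map_zero]; simp only [map_one]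
    linear_combination h2 * 2
end aux

theorem aux_gen {q : ℕ} (hq1 : 1 < q) {G : Type} [Group G] [Fintype G] (hG : Fintype.card G = q ^ 4 - 1)
    (α : G) (hα : ∀ x : G, x ∈ Subgroup.zpowers α) (β : G) :
    (∃ γ : G, β = γ ^ (q + 1)) ↔ β ^ ((q - 1) * (q ^ 2 + 1)) = 1 := by
  have hfac : q ^ 4 - 1 = (q + 1) * ((q - 1) * (q ^ 2 + 1)) := by
    obtain ⟨k, rfl⟩ : ∃ k, q = k + 1 := ⟨q - 1, by omega⟩
    simp only [Nat.add_sub_cancel]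
    apply Nat.sub_eq_of_eq_add; ring
  constructor
  · rintro ⟨γ, rfl⟩
    rw [← pow_mul, ← hfac, ← hG, pow_card_eq_one]
  · intro h
    obtain ⟨m, rfl⟩ := (mem_powers_iff_mem_zpowers (x := α)).2 (hα β)
    simp only at h ⊢
    rw [← pow_mul, ← orderOf_dvd_iff_pow_eq_one, orderOf_eq_card_of_forall_mem_zpowers hα,
      Nat.card_eq_fintype_card, hG, hfac] at h
    have hp : 0 < (q - 1) * (q ^ 2 + 1) := Nat.mul_pos (by omega) (by positivity)
    obtain ⟨k, rfl⟩ := Nat.dvd_of_mul_dvd_mul_right hp h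
    exact ⟨α ^ k, by rw [← pow_mul, mul_comm]⟩

theorem aux_main {q s : ℕ} (hs : 2 ≤ s) (hq : q = 2 ^ s)
    {F E : Type} [Field F] [Fintype F] [DecidableEq F] [Field E] [Fintype E] [DecidableEq E]
    [Algebra F E]
    (hF : Fintype.card F = q) (hE : Fintype.card E = q ^ 4)
    (α : Eˣ) (hα : ∀ x : Eˣ, x ∈ Subgroup.zpowers α) (β : E) (hβ : β ≠ 0) :
    (Finset.univ.filter fun x : E => x ^ (q ^ 2 + 1) = 1 ∧ Algebra.trace F E (β * x) = 0).card
      = if ∃ γ : E, γ ≠ 0 ∧ β = γ ^ (q + 1) then 1 else q + 1 := by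
  have hq1 : 1 < q := by rw [hq]; exact Nat.one_lt_two_pow (by omega)
  have h2F : (2 : F) = 0 := by
    have := Nat.cast_card_eq_zero F
    rw [hF, hq] at this
    push_cast at this
    exact pow_eq_zero_iff (by omega) |>.1 this
  have h2E : (2 : E) = 0 := by
    have := congrArg (algebraMap F E) h2F
    rwa [map_zero, map_ofNat] at this
  have : CharP E 2 := CharTwo.of_one_ne_zero_of_two_eq_zero one_ne_zero h2E
  have hpE : ∀ x : E, x ^ q ^ 4 = x := fun x => by rw [← hE, FiniteField.pow_card]
  let φ := FiniteField.frobeniusAlgHom F E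
  have hφ : ∀ x, φ x = x ^ q := fun x => by rw [← hF]; rfl
  have h4 : ∀ x, φ (φ (φ (φ x))) = x := fun x => by
    simp only [hφ, ← pow_mul]
    have := hpE x
    rwa [show q ^ 4 = q * q * q * q by ring] at this
  have hfr : Module.finrank F E = 4 := by
    have := Module.card_eq_pow_finrank (K := F) (V := E)
    rw [hF, hE] at this
    exact (Nat.pow_right_injective hq1 this).symm
  have htr : ∀ x, algebraMap F E (Algebra.trace F E x) = x + φ x + φ (φ x) + φ (φ (φ x)) := by
    intro x
    rw [FiniteField.algebraMap_trace_eq_sum_pow, hfr, Nat.card_eq_fintype_card, hF]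
    simp only [Finset.sum_range_succ, Finset.sum_range_zero, hφ, ← pow_mul]
    simp only [pow_zero, pow_one, zero_add]
    congr 2 <;> ring
  have hfix : ∀ x, φ x = x → ∃ a : F, algebraMap F E a = x := by
    intro x hx; apply aux_fix; rw [hF, ← hφ, hx]
  obtain ⟨M, hM⟩ : ∃ M, q ^ 4 = 2 * M := by
    refine ⟨2 ^ (s * 4 - 1), ?_⟩
    rw [hq, ← pow_mul, ← pow_succ']; congr 1; omega
  have hsq : q ^ 2 - 1 + 2 = q ^ 2 + 1 := by
    have : 1 ≤ q ^ 2 := Nat.one_le_pow _ _ (by omega)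
    omega
  have hfac : (q ^ 2 - 1) * (q ^ 2 + 1) = q ^ 4 - 1 := by
    have : 1 ≤ q ^ 2 := Nat.one_le_pow _ _ (by omega)
    obtain ⟨k, hk⟩ : ∃ k, q ^ 2 = k + 1 := ⟨q ^ 2 - 1, by omega⟩
    rw [show q ^ 4 = (q ^ 2) ^ 2 by ring, hk]
    simp only [Nat.add_sub_cancel]
    symm; apply Nat.sub_eq_of_eq_add; ring
  have hfac2 : q ^ 4 - 1 = (q + 1) * ((q - 1) * (q ^ 2 + 1)) := by
    obtain ⟨k, rfl⟩ : ∃ k, q = k + 1 := ⟨q - 1, by omega⟩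
    simp only [Nat.add_sub_cancel]
    apply Nat.sub_eq_of_eq_add; ring
  have hpE1 : ∀ x : E, x ≠ 0 → x ^ (q ^ 4 - 1) = 1 := fun x hx => by
    rw [← hE]; exact FiniteField.pow_card_sub_one_eq_one x hx
  set u := (β ^ (q ^ 2 - 1)) ^ M with hu
  set b := (β ^ (q ^ 2 + 1)) ^ M with hb
  have hu1 : u ^ (q ^ 2 + 1) = 1 := by
    rw [hu, ← pow_mul, ← pow_mul,
      show (q ^ 2 - 1) * (M * (q ^ 2 + 1)) = (q ^ 4 - 1) * M by rw [← hfac]; ring, pow_mul, hpE1 β hβ, one_pow]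
  have hu0 : u ≠ 0 := pow_ne_zero _ (pow_ne_zero _ hβ)
  have hb0 : b ≠ 0 := pow_ne_zero _ (pow_ne_zero _ hβ)
  have hbu : b = β * u := by
    rw [hb, hu, ← hsq, pow_add, mul_pow, ← pow_mul β 2, ← hM, hpE, mul_comm]
  have hφφ : ∀ x, φ (φ x) * x = x ^ (q ^ 2 + 1) := by
    intro x; rw [hφ, hφ, ← pow_mul, ← pow_succ, sq]
  have hbb : φ (φ b) = b := by
    have h1 : b ^ (q ^ 2 - 1) = 1 := by
      rw [hb, ← pow_mul, ← pow_mul,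
        show (q ^ 2 + 1) * (M * (q ^ 2 - 1)) = (q ^ 4 - 1) * M by rw [← hfac]; ring, pow_mul,
        hpE1 β hβ, one_pow]
    have h3 : q * q = q ^ 2 - 1 + 1 := by rw [← sq]; omega
    rw [hφ, hφ, ← pow_mul, h3, pow_succ, h1, one_mul]
  have hbF : (∃ γ : E, γ ≠ 0 ∧ β = γ ^ (q + 1)) ↔ ∃ a : F, algebraMap F E a = b := by
    have hcU : Fintype.card Eˣ = q ^ 4 - 1 := by rw [Fintype.card_units, hE]
    have h1 := aux_gen hq1 hcU α hα (Units.mk0 β hβ)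
    have h2 : (∃ γ : E, γ ≠ 0 ∧ β = γ ^ (q + 1)) ↔ ∃ γ : Eˣ, Units.mk0 β hβ = γ ^ (q + 1) := by
      constructor
      · rintro ⟨γ, h0, h⟩
        exact ⟨Units.mk0 γ h0, Units.ext (by simpa using h)⟩
      · rintro ⟨γ, h⟩
        exact ⟨γ, γ.ne_zero, by simpa using congrArg Units.val h⟩
    rw [h2, h1, Units.ext_iff]
    simp only [Units.val_pow_eq_pow_val, Units.val_mk0, Units.val_one]
    have e : b ^ (q - 1) = (β ^ ((q - 1) * (q ^ 2 + 1))) ^ M := by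
      rw [hb, ← pow_mul, ← pow_mul, ← pow_mul]; congr 1; ring
    constructor
    · intro h
      apply hfix
      rw [hφ, show q = q - 1 + 1 by omega, pow_succ, e, h, one_pow, one_mul]
    · rintro ⟨a, ha⟩
      have ha0 : a ≠ 0 := by rintro rfl; rw [map_zero] at ha; exact hb0 ha.symm
      have : b ^ (q - 1) = 1 := by
        rw [← ha, ← map_pow, ← hF, FiniteField.pow_card_sub_one_eq_one a ha0, map_one]
      rw [← hpE (β ^ _), hM, mul_comm 2, pow_mul, ← e, this, one_pow]
  have hcount : (Finset.univ.filter fun x : E => x ^ (q ^ 2 + 1) = 1 ∧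
      Algebra.trace F E (β * x) = 0).card = (Finset.univ.filter fun x : E =>
      φ (φ x) * x = 1 ∧ Algebra.trace F E (b * x) = 0).card := by
    symm
    apply Finset.card_bij' (fun x _ => u * x) (fun x _ => u⁻¹ * x)
    · intro x hx
      simp only [Finset.mem_filter, Finset.mem_univ, true_and, hφφ] at hx ⊢
      rw [mul_pow, hu1, hx.1, one_mul, ← mul_assoc, ← hbu]
      exact ⟨rfl, hx.2⟩
    · intro x hx
      simp only [Finset.mem_filter, Finset.mem_univ, true_and, hφφ] at hx ⊢
      rw [mul_pow, inv_pow, hu1, hx.1, inv_one, one_mul, hbu, mul_assoc, mul_inv_cancel_left₀ hu0]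
      exact ⟨rfl, hx.2⟩
    · intro x _; exact inv_mul_cancel_left₀ hu0 x
    · intro x _; exact mul_inv_cancel_left₀ hu0 x
  rw [hcount]
  split_ifs with h
  · exact aux_A φ h4 htr b hb0 (hbF.1 h)
  · rw [← hF]
    exact aux_B φ h4 htr hfix (by rw [hE, hF]) b (fun h' => h (hbF.2 h')) hbb

theorem aux_weight {q : ℕ} (hq1 : 1 < q)
    {F E : Type} [Field F] [Fintype F] [DecidableEq F] [Field E] [Fintype E] [DecidableEq E]
    [Algebra F E] (hE : Fintype.card E = q ^ 4)
    (α : Eˣ) (hα : ∀ x : Eˣ, x ∈ Subgroup.zpowers α) (β : E) :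
    hammingNorm (fun j : Fin (q ^ 2 + 1) =>
      Algebra.trace F E (β * (((α : E) ^ (q ^ 2 - 1)) ^ (j : ℕ)))) +
    (Finset.univ.filter fun x : E => x ^ (q ^ 2 + 1) = 1 ∧ Algebra.trace F E (β * x) = 0).card
      = q ^ 2 + 1 := by
  have h1q : 1 < q ^ 2 := Nat.one_lt_pow (by omega) hq1
  have hfac : (q ^ 2 - 1) * (q ^ 2 + 1) = q ^ 4 - 1 := by
    obtain ⟨k, hk⟩ : ∃ k, q ^ 2 = k + 1 := ⟨q ^ 2 - 1, by omega⟩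
    rw [show q ^ 4 = (q ^ 2) ^ 2 by ring, hk]
    simp only [Nat.add_sub_cancel]
    symm; apply Nat.sub_eq_of_eq_add; ring
  have hcU : Fintype.card Eˣ = q ^ 4 - 1 := by rw [Fintype.card_units, hE]
  have hoα : orderOf α = q ^ 4 - 1 := by
    rw [orderOf_eq_card_of_forall_mem_zpowers hα, Nat.card_eq_fintype_card, hcU]
  have ho : orderOf (α ^ (q ^ 2 - 1)) = q ^ 2 + 1 := by
    rw [orderOf_pow_of_dvd (by omega) (by rw [hoα, ← hfac]; exact dvd_mul_right _ _), hoα, ← hfac,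
      Nat.mul_div_cancel_left _ (by omega)]
  set θ : E := (α : E) ^ (q ^ 2 - 1) with hθ
  have hoθ : orderOf θ = q ^ 2 + 1 := by
    rw [← ho, ← orderOf_units]; simp [hθ]
  have hz : (Finset.univ.filter fun x : E => x ^ (q ^ 2 + 1) = 1 ∧
      Algebra.trace F E (β * x) = 0).card =
      (Finset.univ.filter fun j : Fin (q ^ 2 + 1) =>
        Algebra.trace F E (β * θ ^ (j : ℕ)) = 0).card := by
    symm
    apply Finset.card_bij (fun (j : Fin (q ^ 2 + 1)) _ => θ ^ (j : ℕ))
    · intro j hj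
      simp only [Finset.mem_filter, Finset.mem_univ, true_and] at hj ⊢
      refine ⟨?_, hj⟩
      have h1 : θ ^ (q ^ 2 + 1) = 1 := by rw [← hoθ, pow_orderOf_eq_one]
      rw [← pow_mul, mul_comm, pow_mul, h1, one_pow]
    · intro i _ j _ h
      apply Fin.ext
      exact pow_injOn_Iio_orderOf (by simpa [hoθ] using i.2) (by simpa [hoθ] using j.2) h
    · intro x hx
      simp only [Finset.mem_filter, Finset.mem_univ, true_and] at hx
      have hpr : IsPrimitiveRoot θ (q ^ 2 + 1) := by rw [← hoθ]; exact IsPrimitiveRoot.orderOf θ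
      obtain ⟨i, hi, rfl⟩ := hpr.eq_pow_of_pow_eq_one hx.1
      exact ⟨⟨i, hi⟩, by simpa using hx.2, rfl⟩
  rw [hz, hammingNorm, add_comm, Finset.card_filter_add_card_filter_not]
  simp



/-- For q = 2^s (s ≥ 2), r = q⁴, N = q²−1, n = q²+1, every nonzero
codeword of the irreducible cyclic code C(r,N) over GF(q) has Hamming weight q²−q or
q²; the codeword c(β) (β ≠ 0) has weight q² iff β is a (q+1)-th power in GF(r)^*, and
the code has exactly (q²−q)(q²+1) codewords of weight q²−q and exactly (q−1)(q²+1)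
codewords of weight q². -/
theorem irreducible_cyclic_code_weight_distribution {q s : ℕ} (hs : 2 ≤ s) (hq : q = 2 ^ s)
    (F E : Type) [Field F] [Fintype F] [DecidableEq F] [Field E] [Fintype E] [Algebra F E]
    (hF : Fintype.card F = q) (hE : Fintype.card E = q ^ 4)
    (α : Eˣ) (hα : ∀ x : Eˣ, x ∈ Subgroup.zpowers α) :
    let cw : E → (Fin (q ^ 2 + 1) → F) := fun β j =>
      Algebra.trace F E (β * (((α : E) ^ (q ^ 2 - 1)) ^ (j : ℕ)))
    (∀ w ∈ Set.range cw, w ≠ 0 →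
      hammingNorm w = q ^ 2 - q ∨ hammingNorm w = q ^ 2) ∧
    (∀ β : E, β ≠ 0 →
      ((∃ γ : E, γ ≠ 0 ∧ β = γ ^ (q + 1)) → hammingNorm (cw β) = q ^ 2) ∧
      (¬(∃ γ : E, γ ≠ 0 ∧ β = γ ^ (q + 1)) → hammingNorm (cw β) = q ^ 2 - q)) ∧
    {w : Fin (q ^ 2 + 1) → F | w ∈ Set.range cw ∧ hammingNorm w = q ^ 2 - q}.ncard
      = (q ^ 2 - q) * (q ^ 2 + 1) ∧
    {w : Fin (q ^ 2 + 1) → F | w ∈ Set.range cw ∧ hammingNorm w = q ^ 2}.ncard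
      = (q - 1) * (q ^ 2 + 1) := by
  classical
  intro cw
  have hq1 : 1 < q := by rw [hq]; exact Nat.one_lt_two_pow (by omega)
  have hqq : q < q ^ 2 := by nlinarith
  have hW : ∀ β : E, β ≠ 0 →
      ((∃ γ : E, γ ≠ 0 ∧ β = γ ^ (q + 1)) → hammingNorm (cw β) = q ^ 2) ∧
      (¬(∃ γ : E, γ ≠ 0 ∧ β = γ ^ (q + 1)) → hammingNorm (cw β) = q ^ 2 - q) := by
    intro β hβ
    have h1 := aux_main hs hq hF hE α hα β hβ
    have h2 := aux_weight (F := F) hq1 hE α hα β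
    rw [h1] at h2
    change hammingNorm (cw β) + _ = _ at h2
    constructor
    · intro h; rw [if_pos h] at h2; omega
    · intro h; rw [if_neg h] at h2; omega
  have hcw0 : cw 0 = 0 := by funext j; simp [cw]
  have hsub : ∀ x y, cw x - cw y = cw (x - y) := by
    intro x y; funext j; simp [cw, sub_mul]
  have hinj : Function.Injective cw := by
    intro x y h
    by_contra hne
    have h0 := hW (x - y) (sub_ne_zero.2 hne)
    rw [← hsub, h, sub_self, hammingNorm_zero] at h0
    by_cases hp : ∃ γ : E, γ ≠ 0 ∧ x - y = γ ^ (q + 1)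
    · have := h0.1 hp; omega
    · have := h0.2 hp; omega
  have hcU : Fintype.card Eˣ = q ^ 4 - 1 := by rw [Fintype.card_units, hE]
  have hfac2 : q ^ 4 - 1 = (q + 1) * ((q - 1) * (q ^ 2 + 1)) := by
    obtain ⟨k, rfl⟩ : ∃ k, q = k + 1 := ⟨q - 1, by omega⟩
    simp only [Nat.add_sub_cancel]
    apply Nat.sub_eq_of_eq_add; ring
  have hP : (Finset.univ.filter fun β : E => ∃ γ : E, γ ≠ 0 ∧ β = γ ^ (q + 1)).card =
      (q - 1) * (q ^ 2 + 1) := by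
    have h := IsCyclic.card_powMonoidHom_range (G := Eˣ) (q + 1)
    rw [Nat.card_eq_fintype_card (α := Eˣ), hcU, hfac2, Nat.gcd_eq_right (dvd_mul_right _ _),
      Nat.mul_div_cancel_left _ (by omega)] at h
    rw [← h, Nat.card_eq_fintype_card, ← Fintype.card_coe]
    symm
    refine Fintype.card_of_bijective (f := fun x => ⟨(x.1 : E), ?_⟩) ⟨?_, ?_⟩
    · obtain ⟨γ, hγ⟩ := x.2
      simp only [Finset.mem_filter, Finset.mem_univ, true_and]
      exact ⟨γ, γ.ne_zero, by rw [← hγ]; simp⟩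
    · intro x y h
      exact Subtype.ext (Units.ext (congrArg Subtype.val h))
    · rintro ⟨x, hx⟩
      simp only [Finset.mem_filter, Finset.mem_univ, true_and] at hx
      obtain ⟨γ, h0, rfl⟩ := hx
      exact ⟨⟨Units.mk0 γ h0 ^ (q + 1), ⟨Units.mk0 γ h0, rfl⟩⟩, by simp⟩
  have hP0 : ∀ β : E, (∃ γ : E, γ ≠ 0 ∧ β = γ ^ (q + 1)) → β ≠ 0 := by
    rintro _ ⟨γ, h0, rfl⟩; exact pow_ne_zero _ h0
  have hcnt : ∀ n, {w : Fin (q ^ 2 + 1) → F | w ∈ Set.range cw ∧ hammingNorm w = n}.ncard =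
      (Finset.univ.filter fun β : E => hammingNorm (cw β) = n).card := by
    intro n
    have : {w : Fin (q ^ 2 + 1) → F | w ∈ Set.range cw ∧ hammingNorm w = n} =
        cw '' ((Finset.univ.filter fun β : E => hammingNorm (cw β) = n : Finset E) : Set E) := by
      ext w
      simp only [Set.mem_ofPred_eq, Set.mem_range, Set.mem_image, Finset.coe_filter,
        Finset.mem_univ, true_and]
      constructor
      · rintro ⟨⟨β, rfl⟩, h⟩; exact ⟨β, h, rfl⟩
      · rintro ⟨β, h, rfl⟩; exact ⟨⟨β, rfl⟩, h⟩
    rw [this, Set.ncard_image_of_injective _ hinj, Set.ncard_coe_finset]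
  have hA : (Finset.univ.filter fun β : E => hammingNorm (cw β) = q ^ 2) =
      Finset.univ.filter fun β : E => ∃ γ : E, γ ≠ 0 ∧ β = γ ^ (q + 1) := by
    ext β
    simp only [Finset.mem_filter, Finset.mem_univ, true_and]
    constructor
    · intro h
      by_contra hn
      by_cases h0 : β = 0
      · rw [h0, hcw0, hammingNorm_zero] at h; omega
      · have := (hW β h0).2 hn; omega
    · intro h; exact (hW β (hP0 β h)).1 h
  have hB : (Finset.univ.filter fun β : E => hammingNorm (cw β) = q ^ 2 - q) =
      (Finset.univ.erase 0) \ Finset.univ.filter fun β : E => ∃ γ : E, γ ≠ 0 ∧ β = γ ^ (q + 1) := by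
    ext β
    simp only [Finset.mem_filter, Finset.mem_univ, true_and, Finset.mem_sdiff, Finset.mem_erase,
      and_true]
    constructor
    · intro h
      have h0 : β ≠ 0 := by
        rintro rfl
        rw [hcw0, hammingNorm_zero] at h; omega
      refine ⟨h0, fun hn => ?_⟩
      have := (hW β h0).1 hn; omega
    · rintro ⟨h0, h⟩; exact (hW β h0).2 h
  refine ⟨?_, hW, ?_, ?_⟩
  · rintro _ ⟨β, rfl⟩ hw
    have h0 : β ≠ 0 := by rintro rfl; exact hw hcw0
    by_cases hp : ∃ γ : E, γ ≠ 0 ∧ β = γ ^ (q + 1)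
    · exact Or.inr ((hW β h0).1 hp)
    · exact Or.inl ((hW β h0).2 hp)
  · rw [hcnt, hB, Finset.card_sdiff_of_subset, hP, Finset.card_erase_of_mem (Finset.mem_univ _),
      Finset.card_univ, hE, hfac2]
    · apply Nat.sub_eq_of_eq_add
      rw [show q ^ 2 - q = q * (q - 1) by rw [Nat.mul_sub, sq, mul_one]]
      ring
    · intro β hβ
      simp only [Finset.mem_filter, Finset.mem_univ, true_and] at hβ
      simpa using hP0 β hβ
  · rw [hcnt, hA, hP]
end

section
/- Let q = 2^s with s ≥ 2 and regard GF(q⁴) as a 4-dimensional vector space over GF(q). Let U = { u ∈ GF(q⁴)^* : u^{q²+1} = 1 } be the subgroup of order q²+1 of GF(q⁴)^*. Then any two distinct elements of U are not GF(q)-proportional (so the elements of U span q²+1 distinct points of PG(3,q)), and any three distinct elements of U are linearly independent over GF(q); hence U determines an ovoid in PG(3,q). -/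
theorem ovoid_key {q s : ℕ} (hq : q = 2 ^ s)
    (F E : Type) [Field F] [Fintype F] [Field E] [CharP E 2] [Algebra F E]
    (hF : Fintype.card F = q) (u v w : E) (hu0 : u ≠ 0) (hv0 : v ≠ 0) (hw0 : w ≠ 0)
    (hu : u ^ (q ^ 2 + 1) = 1) (hv : v ^ (q ^ 2 + 1) = 1) (hw : w ^ (q ^ 2 + 1) = 1)
    (huv : u ≠ v) (a b c : F) (h : a • u + b • v + c • w = 0) : a = 0 ∨ b = 0 := by
  by_contra! hab
  obtain ⟨ha, hb⟩ := hab
  have : Fact (Nat.Prime 2) := ⟨Nat.prime_two⟩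
  have hadd : ∀ x y : E, (x + y) ^ q = x ^ q + y ^ q := by
    intro x y; rw [hq]; exact add_pow_char_pow x y 2 s
  have hadd2 : ∀ x y : E, (x + y) ^ (q ^ 2) = x ^ (q ^ 2) + y ^ (q ^ 2) := by
    intro x y; rw [sq, pow_mul, hadd, hadd, pow_mul, pow_mul]
  have hfix : ∀ x : F, (algebraMap F E x) ^ q = algebraMap F E x := by
    intro x; rw [← map_pow, ← hF, FiniteField.pow_card]
  have hfix2 : ∀ x : F, (algebraMap F E x) ^ (q ^ 2) = algebraMap F E x := by
    intro x; rw [sq, pow_mul, hfix, hfix]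
  have hinv : ∀ x : E, x ≠ 0 → x ^ (q ^ 2 + 1) = 1 → x ^ (q ^ 2) = x⁻¹ := by
    intro x hx h1
    rw [pow_succ] at h1
    exact eq_inv_of_mul_eq_one_left h1
  have hA : algebraMap F E a ≠ 0 := by simpa using ha
  have hB : algebraMap F E b ≠ 0 := by simpa using hb
  simp only [Algebra.smul_def] at h
  have h2 := congrArg (fun x : E => x ^ (q ^ 2)) h
  have hq0 : q ^ 2 ≠ 0 := by rw [hq]; positivity
  simp only [hadd2, mul_pow, hfix2, hinv u hu0 hu, hinv v hv0 hv, hinv w hw0 hw,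
    zero_pow hq0] at h2
  have hd : u * v⁻¹ + (u * v⁻¹)⁻¹ = algebraMap F E ((c ^ 2 - a ^ 2 - b ^ 2) / (a * b)) := by
    simp only [map_div₀, map_sub, map_pow, map_mul]
    generalize algebraMap F E a = A at *
    generalize algebraMap F E b = B at *
    generalize algebraMap F E c = C at *
    have e1 : A * u + B * v = - (C * w) := by linear_combination h
    have e2 : A * u⁻¹ + B * v⁻¹ = - (C * w⁻¹) := by linear_combination h2
    have e3 : (A * u + B * v) * (A * u⁻¹ + B * v⁻¹) = C ^ 2 := by
      rw [e1, e2]; field_simp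
    rw [← e3]; field_simp; ring
  have ht1 : u * v⁻¹ ≠ 1 := by
    intro h1; apply huv; field_simp at h1; exact h1
  have htU : (u * v⁻¹) ^ (q ^ 2) = (u * v⁻¹)⁻¹ := by
    rw [mul_pow, inv_pow, hinv u hu0 hu, hinv v hv0 hv]; simp [mul_comm]
  have ht0 : u * v⁻¹ ≠ 0 := by simp [hu0, hv0]
  generalize u * v⁻¹ = t at *
  have h3 := hfix ((c ^ 2 - a ^ 2 - b ^ 2) / (a * b))
  rw [← hd, hadd, inv_pow] at h3
  have htq0 : t ^ q ≠ 0 := pow_ne_zero _ ht0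
  have ht2 : t ^ (q ^ 2) = t := by
    rw [sq, pow_mul]
    generalize hr : t ^ q = r at *
    have h4 : (r - t) * (r * t - 1) = 0 := by
      field_simp at h3; linear_combination h3
    rcases mul_eq_zero.mp h4 with h5 | h5
    · rw [sub_eq_zero.mp h5] at hr ⊢; exact hr
    · have : r = t⁻¹ := eq_inv_of_mul_eq_one_left (sub_eq_zero.mp h5)
      rw [this, inv_pow, hr, this, inv_inv]
  rw [ht2] at htU
  have h6 : t * t = 1 := by
    nth_rewrite 1 [htU]; exact inv_mul_cancel₀ ht0
  have h20 : (2 : E) = 0 := CharTwo.two_eq_zero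
  have h7 : (t - 1) ^ 2 = 0 := by linear_combination h6 + (1 - t) * h20
  exact ht1 (sub_eq_zero.mp (pow_eq_zero_iff (two_ne_zero) |>.mp h7))

theorem ovoid_card {q : ℕ} (hq : 2 ≤ q) (E : Type) [Field E] [Fintype E]
    (hE : Fintype.card E = q ^ 4) :
    ({u : E | u ≠ 0 ∧ u ^ (q ^ 2 + 1) = 1} : Set E).ncard = q ^ 2 + 1 := by
  classical
  obtain ⟨g, hg⟩ := IsCyclic.exists_generator (α := Eˣ)
  have ho : orderOf g = q ^ 4 - 1 := by
    rw [orderOf_eq_card_of_forall_mem_zpowers hg, Nat.card_eq_fintype_card, Fintype.card_units, hE]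
  have hmul : q ^ 4 - 1 = (q ^ 2 - 1) * (q ^ 2 + 1) := by
    have : 1 ≤ q ^ 2 := Nat.one_le_pow _ _ (by omega)
    obtain ⟨k, hk⟩ := Nat.exists_eq_add_of_le this
    have : q ^ 4 = (q ^ 2) ^ 2 := by ring
    rw [this, hk]
    simp only [Nat.add_sub_cancel_left]
    apply Nat.sub_eq_of_eq_add; ring
  have h4 : 2 ≤ q ^ 2 := by nlinarith
  have hp : IsPrimitiveRoot (g : E) (q ^ 4 - 1) := by
    rw [IsPrimitiveRoot.coe_units_iff, ← ho]; exact IsPrimitiveRoot.orderOf g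
  have hp2 := hp.pow (by rw [hmul]; apply Nat.mul_pos <;> omega) hmul
  have := hp2.card_nthRootsFinset
  have hs : ({u : E | u ≠ 0 ∧ u ^ (q ^ 2 + 1) = 1} : Set E)
      = ↑(Polynomial.nthRootsFinset (q ^ 2 + 1) (1 : E)) := by
    ext x
    simp only [Set.mem_ofPred_eq, Finset.mem_coe]
    rw [Polynomial.mem_nthRootsFinset (by omega)]
    refine ⟨fun h => h.2, fun h => ⟨?_, h⟩⟩
    rintro rfl
    simp at h
  rw [hs, Set.ncard_coe_finset, this]


/-- For q = 2^s (s ≥ 2), view GF(q⁴) as a 4-dimensional GF(q)-vector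
space and let U = { u ∈ GF(q⁴)^* : u^{q²+1} = 1 }, the subgroup of order q²+1.  Then U
has q²+1 elements, any two distinct elements of U are not GF(q)-proportional, and any
three distinct elements of U are linearly independent over GF(q); hence U determines an
ovoid in PG(3,q). -/
theorem norm_one_subgroup_is_ovoid {q s : ℕ} (hs : 2 ≤ s) (hq : q = 2 ^ s)
    (F E : Type) [Field F] [Fintype F] [Field E] [Fintype E] [Algebra F E]
    (hF : Fintype.card F = q) (hE : Fintype.card E = q ^ 4) :
    let U : Set E := {u : E | u ≠ 0 ∧ u ^ (q ^ 2 + 1) = 1}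
    U.ncard = q ^ 2 + 1 ∧
    (∀ u ∈ U, ∀ v ∈ U, u ≠ v → ∀ c : F, v ≠ c • u) ∧
    (∀ u ∈ U, ∀ v ∈ U, ∀ w ∈ U, u ≠ v → u ≠ w → v ≠ w →
      LinearIndependent F ![u, v, w]) := by


  intro U
  have : Fact (Nat.Prime 2) := ⟨Nat.prime_two⟩
  have hch : CharP E 2 := charP_of_card_eq_prime_pow (f := s * 4) (by
    rw [hE, hq, pow_mul])
  have hq2 : 2 ≤ q := by
    rw [hq]; exact le_self_pow₀ (by norm_num) (by omega)
  refine ⟨ovoid_card hq2 E hE, ?_, ?_⟩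
  · rintro u ⟨hu0, hu⟩ v ⟨hv0, hv⟩ huv c h
    rcases ovoid_key hq F E hF u v v hu0 hv0 hv0 hu hv hv huv c (-1) 0 (by rw [← h]; simp)
      with h1 | h1
    · rw [h1, zero_smul] at h; exact hv0 h
    · simp at h1
  · rintro u ⟨hu0, hu⟩ v ⟨hv0, hv⟩ w ⟨hw0, hw⟩ huv huw hvw
    rw [Fintype.linearIndependent_iff]
    intro g hg
    simp only [Fin.sum_univ_three, Matrix.cons_val] at hg
    have h1 := ovoid_key hq F E hF u v w hu0 hv0 hw0 hu hv hw huv _ _ _ hg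
    have h2 := ovoid_key hq F E hF u w v hu0 hw0 hv0 hu hw hv huw (g 0) (g 2) (g 1)
      (by rw [← hg]; abel)
    have h3 := ovoid_key hq F E hF v w u hv0 hw0 hu0 hv hw hu hvw (g 1) (g 2) (g 0)
      (by rw [← hg]; abel)
    have : g 0 = 0 ∧ g 1 = 0 ∧ g 2 = 0 := by
      rcases h1 with h1 | h1 <;> rcases h2 with h2 | h2 <;> rcases h3 with h3 | h3 <;>
        simp_all
    intro i
    fin_cases i
    · exact this.1
    · exact this.2.1
    · exact this.2.2
end

section
/- Let q ≥ 4 be a prime power and let C be a linear code over GF(q) with parameters [q²+1, 4, q²−q]. Let B be the collection of distinct supports of codewords of C of Hamming weight q²−q (each support being a subset of the coordinate set of size q²+1). Then every member of B has cardinality q²−q, and for every 3-element subset T of the coordinate set, the number of members of B containing T equals (q−2)(q²−q−1); that is, (coordinate set, B) is a 3-(q²+1, q²−q, (q−2)(q²−q−1)) design. -/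
open Finset in
theorem SD_count {α : Type*} [Fintype α] [DecidableEq α] (P : Finset (Finset α)) (X : Finset α) :
    ∑ B ∈ P, #(B ∩ X) = ∑ x ∈ X, #{B ∈ P | x ∈ B} := by
  have h := sum_card_bipartiteAbove_eq_sum_card_bipartiteBelow
    (s := P) (t := X) (fun (B : Finset α) (x : α) => x ∈ B)
  refine Eq.trans (sum_congr rfl fun B _ => ?_) h
  congr 1
  ext x
  simp [bipartiteAbove, and_comm]

open Finset in
theorem SD_steiner {α : Type*} [Fintype α] [DecidableEq α] (q : ℕ) (hq : 4 ≤ q)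
    (hα : Fintype.card α = q ^ 2 + 1) (P : Finset (Finset α))
    (hcard : ∀ B ∈ P, #B = q + 1)
    (huniq : ∀ a b c : α, a ≠ b → a ≠ c → b ≠ c → #{B ∈ P | a ∈ B ∧ b ∈ B ∧ c ∈ B} = 1)
    (a b c : α) (hab : a ≠ b) (hac : a ≠ c) (hbc : b ≠ c) :
    #{B ∈ P | a ∉ B ∧ b ∉ B ∧ c ∉ B} = (q - 2) * (q ^ 2 - q - 1) := by
  have h2 : ∀ a b : α, a ≠ b → #{B ∈ P | a ∈ B ∧ b ∈ B} = q + 1 := by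
    intro a b hab
    have h := SD_count {B ∈ P | a ∈ B ∧ b ∈ B} ((univ.erase a).erase b)
    have e1 : ∀ B ∈ ({B ∈ P | a ∈ B ∧ b ∈ B} : Finset (Finset α)),
        #(B ∩ ((univ.erase a).erase b)) = q - 1 := by
      intro B hB
      simp only [mem_filter] at hB
      have : B ∩ ((univ.erase a).erase b) = (B.erase a).erase b := by
        ext x; simp; tauto
      rw [this, card_erase_of_mem (by simp [hB.2.2, hab.symm]), card_erase_of_mem hB.2.1,
        hcard B hB.1]
      omega
    have e2 : ∀ x ∈ (univ.erase a).erase b,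
        #{B ∈ ({B ∈ P | a ∈ B ∧ b ∈ B} : Finset (Finset α)) | x ∈ B} = 1 := by
      intro x hx
      simp only [mem_erase, mem_univ, and_true] at hx
      rw [filter_filter]
      simp only [and_assoc]
      exact huniq a b x hab (Ne.symm hx.2) (Ne.symm hx.1)
    rw [sum_congr rfl e1, sum_congr rfl e2] at h
    simp only [sum_const, smul_eq_mul, mul_one] at h
    rw [card_erase_of_mem (by simp [hab.symm]), card_erase_of_mem (mem_univ _), card_univ,
      hα] at h
    obtain ⟨r, rfl⟩ : ∃ r, q = r + 1 := ⟨q - 1, by omega⟩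
    simp only [Nat.add_sub_cancel] at h
    have : (r + 1) ^ 2 - 1 = (r + 1 + 1) * r := by
      rw [Nat.sub_eq_iff_eq_add (Nat.one_le_pow _ _ (by omega))]; ring
    rw [this] at h
    exact Nat.eq_of_mul_eq_mul_right (by omega) h
  have h1 : ∀ a : α, #{B ∈ P | a ∈ B} = q * (q + 1) := by
    intro a
    have h := SD_count {B ∈ P | a ∈ B} (univ.erase a)
    have e1 : ∀ B ∈ ({B ∈ P | a ∈ B} : Finset (Finset α)), #(B ∩ (univ.erase a)) = q := by
      intro B hB
      simp only [mem_filter] at hB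
      have : B ∩ (univ.erase a) = B.erase a := by
        ext x; simp; tauto
      rw [this, card_erase_of_mem hB.2, hcard B hB.1]
      omega
    have e2 : ∀ x ∈ univ.erase a,
        #{B ∈ ({B ∈ P | a ∈ B} : Finset (Finset α)) | x ∈ B} = q + 1 := by
      intro x hx
      simp only [mem_erase, mem_univ, and_true] at hx
      rw [filter_filter]
      exact h2 a x (Ne.symm hx)
    rw [sum_congr rfl e1, sum_congr rfl e2] at h
    simp only [sum_const, smul_eq_mul] at h
    rw [card_erase_of_mem (mem_univ _), card_univ, hα, Nat.add_sub_cancel] at h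
    refine Nat.eq_of_mul_eq_mul_right (show 0 < q by omega) ?_
    rw [h]; ring
  have h0 : #P = q * (q ^ 2 + 1) := by
    have h := SD_count P univ
    simp only [inter_univ] at h
    rw [sum_congr rfl hcard, sum_congr rfl (fun x _ => h1 x)] at h
    simp only [sum_const, smul_eq_mul] at h
    rw [card_univ, hα] at h
    refine Nat.eq_of_mul_eq_mul_right (show 0 < q + 1 by omega) ?_
    rw [h]; ring
  have key : (#{B ∈ P | a ∉ B ∧ b ∉ B ∧ c ∉ B} : ℤ) = #P
      - #{B ∈ P | a ∈ B} - #{B ∈ P | b ∈ B} - #{B ∈ P | c ∈ B}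
      + #{B ∈ P | a ∈ B ∧ b ∈ B} + #{B ∈ P | a ∈ B ∧ c ∈ B} + #{B ∈ P | b ∈ B ∧ c ∈ B}
      - #{B ∈ P | a ∈ B ∧ b ∈ B ∧ c ∈ B} := by
    rw [card_eq_sum_ones P]
    simp only [card_filter]
    push_cast
    simp only [← sum_sub_distrib, ← sum_add_distrib]
    refine sum_congr rfl fun B _ => ?_
    by_cases ha : a ∈ B <;> by_cases hb : b ∈ B <;> by_cases hc : c ∈ B <;> simp [ha, hb, hc]
  rw [h0, h1, h1, h1, h2 a b hab, h2 a c hac, h2 b c hbc, huniq a b c hab hac hbc] at key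
  obtain ⟨r, rfl⟩ : ∃ r, q = r + 2 := ⟨q - 2, by omega⟩
  have e : (r + 2) ^ 2 - (r + 2) - 1 = r ^ 2 + 3 * r + 1 := by
    have : (r + 2) ^ 2 = r ^ 2 + 3 * r + 1 + 1 + (r + 2) := by ring
    omega
  rw [e, Nat.add_sub_cancel]
  zify
  rw [key]
  push_cast
  ring

open Finset in
theorem SD_line {F : Type*} [Field F] [Fintype F] [DecidableEq F] (x y : F)
    (h : ¬ (x = 0 ∧ y = 0)) :
    #{p : F × F | p.1 * x + p.2 * y = 0} = Fintype.card F := by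
  have : ({p : F × F | p.1 * x + p.2 * y = 0} : Finset (F × F))
      = univ.image (fun t : F => (t * y, - (t * x))) := by
    ext ⟨a, b⟩
    simp only [mem_filter, mem_univ, true_and, mem_image, Prod.mk.injEq]
    constructor
    · intro e
      by_cases hx : x = 0
      · have hy : y ≠ 0 := fun hy => h ⟨hx, hy⟩
        refine ⟨a / y, by field_simp, ?_⟩
        subst hx
        simp [hy] at e
        simp [e]
      · refine ⟨- b / x, ?_, by field_simp⟩
        field_simp
        linear_combination -e
    · rintro ⟨t, rfl, rfl⟩
      ring
  rw [this, card_image_of_injective, card_univ]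
  intro s t hst
  simp only [Prod.mk.injEq, neg_inj] at hst
  by_cases hx : x = 0
  · have hy : y ≠ 0 := fun hy => h ⟨hx, hy⟩
    exact mul_right_cancel₀ hy hst.1
  · exact mul_right_cancel₀ hx hst.2

open Finset in
theorem SD_pencil {q : ℕ} {F : Type} [Field F] [Fintype F] [DecidableEq F]
    (hF : Fintype.card F = q) (hq : 4 ≤ q)
    (C : Submodule F (Fin (q ^ 2 + 1) → F))
    (hz : ∀ c ∈ C, c ≠ 0 → #{i | c i = 0} ≤ q + 1)
    (c d : Fin (q ^ 2 + 1) → F) (hc : c ∈ C) (hd : d ∈ C)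
    (hind : ∀ a b : F, a • c + b • d = 0 → a = 0 ∧ b = 0) :
    #{i | c i = 0 ∧ d i = 0} ≤ 2 ∧
      (#{i | c i = 0 ∧ d i = 0} = 2 → #{i | c i = 0} = q + 1) := by
  set S : Finset (Fin (q ^ 2 + 1)) := {i | c i = 0 ∧ d i = 0} with hS
  have h := sum_card_bipartiteAbove_eq_sum_card_bipartiteBelow
    (s := (univ : Finset (F × F))) (t := (univ : Finset (Fin (q ^ 2 + 1))))
    (fun p i => p.1 * c i + p.2 * d i = 0)
  simp only [bipartiteAbove, bipartiteBelow] at h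
  have hR : ∑ i : Fin (q ^ 2 + 1), #{p : F × F | p.1 * c i + p.2 * d i = 0}
      = #S * q ^ 2 + #Sᶜ * q := by
    rw [← sum_add_sum_compl S]
    congr 1
    · rw [← smul_eq_mul, ← sum_const]
      refine sum_congr rfl fun i hi => ?_
      simp only [hS, mem_filter, mem_univ, true_and] at hi
      simp [hi.1, hi.2, hF, sq]
    · rw [← smul_eq_mul, ← sum_const]
      refine sum_congr rfl fun i hi => ?_
      simp only [hS, mem_filter, mem_univ, true_and, mem_compl] at hi
      rw [SD_line _ _ hi, hF]
  rw [hR] at h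
  have hSc : #S + #Sᶜ = q ^ 2 + 1 := by
    rw [card_add_card_compl]; simp
  let f : F × F → ℕ := fun p => #{i | p.1 * c i + p.2 * d i = 0}
  have hf0 : f 0 = q ^ 2 + 1 := by simp [f]
  have hfle : ∀ p ∈ univ.erase (0 : F × F), f p ≤ q + 1 := by
    intro p hp
    simp only [mem_erase, mem_univ, and_true] at hp
    have := hz (p.1 • c + p.2 • d) (C.add_mem (C.smul_mem _ hc) (C.smul_mem _ hd))
      (fun e => hp (Prod.ext (hind _ _ e).1 (hind _ _ e).2))
    simpa [f] using this
  have hsum : ∑ p, f p = #S * q ^ 2 + #Sᶜ * q := h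
  rw [← add_sum_erase _ _ (mem_univ (0 : F × F)), hf0] at hsum
  have hce : #(univ.erase (0 : F × F)) = q ^ 2 - 1 := by
    rw [card_erase_of_mem (mem_univ _), card_univ, Fintype.card_prod, hF, sq]
  have hle := sum_le_sum hfle
  rw [sum_const, hce, smul_eq_mul] at hle
  obtain ⟨r, rfl⟩ : ∃ r, q = r + 1 := ⟨q - 1, by omega⟩
  have e1 : (r + 1) ^ 2 - 1 = r * (r + 2) := by
    rw [Nat.sub_eq_iff_eq_add (Nat.one_le_pow _ _ (by omega))]; ring
  rw [e1] at hle
  constructor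
  · by_contra hcon
    push Not at hcon
    zify at hsum hle hSc hcon hq
    have : (#Sᶜ : ℤ) = (r + 1) ^ 2 + 1 - #S := by linarith
    rw [this] at hsum
    have hr : (0 : ℤ) < (r + 1) * r := by nlinarith
    nlinarith
  · intro h2
    have heq : ∑ p ∈ univ.erase (0 : F × F), f p = ∑ p ∈ univ.erase (0 : F × F), (r + 1 + 1) := by
      rw [sum_const, hce, e1, smul_eq_mul]
      rw [h2] at hsum hSc
      have : #Sᶜ = r ^ 2 + 2 * r := by nlinarith
      rw [this] at hsum
      nlinarith
    have := (sum_eq_sum_iff_of_le hfle).1 heq (1, 0) (by simp)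
    simpa [f] using this

open Finset in
theorem SD_ker {n m : ℕ} {F : Type} [Field F] (C : Submodule F (Fin n → F))
    (hdim : Module.finrank F C = 4) (g : Fin m → Fin n) :
    4 ≤ m + Module.finrank F
      (LinearMap.ker ((LinearMap.funLeft F F g).comp C.subtype)) := by
  have h := LinearMap.finrank_range_add_finrank_ker ((LinearMap.funLeft F F g).comp C.subtype)
  have h2 := Submodule.finrank_le (LinearMap.range ((LinearMap.funLeft F F g).comp C.subtype))
  rw [Module.finrank_fin_fun] at h2
  omega

theorem SD_two {n : ℕ} {F : Type} [Field F] (C : Submodule F (Fin n → F))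
    (hdim : Module.finrank F C = 4) (i j : Fin n) (c : Fin n → F)
    (hc0 : c ≠ 0) :
    ∃ d ∈ C, d i = 0 ∧ d j = 0 ∧ ∀ a b : F, a • c + b • d = 0 → a = 0 ∧ b = 0 := by
  have h := SD_ker C hdim ![i, j]
  set K := LinearMap.ker ((LinearMap.funLeft F F ![i, j]).comp C.subtype) with hK
  have hK2 : Module.finrank F (K.map C.subtype) = Module.finrank F K :=
    Submodule.finrank_map_subtype_eq _ _
  have hnot : ¬ (K.map C.subtype ≤ F ∙ c) := by
    intro hle
    have := Submodule.finrank_mono hle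
    rw [finrank_span_singleton hc0] at this
    omega
  rw [SetLike.not_le_iff_exists] at hnot
  obtain ⟨d, hd, hdn⟩ := hnot
  obtain ⟨d', hd', rfl⟩ := hd
  have hk : (LinearMap.funLeft F F ![i, j]).comp C.subtype d' = 0 := hd'
  refine ⟨d'.1, d'.2, ?_, ?_, ?_⟩
  · simpa using congrFun hk 0
  · simpa using congrFun hk 1
  · intro a b hab
    have hb : b = 0 := by
      by_contra hb
      apply hdn
      rw [Submodule.mem_span_singleton]
      refine ⟨- a / b, ?_⟩
      ext x
      have := congrFun hab x
      simp at this ⊢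
      field_simp
      linear_combination -this
    subst hb
    simpa [hc0] using hab

theorem SD_three {n : ℕ} {F : Type} [Field F] (C : Submodule F (Fin n → F))
    (hdim : Module.finrank F C = 4) (i j k : Fin n) :
    ∃ d ∈ C, d ≠ 0 ∧ d i = 0 ∧ d j = 0 ∧ d k = 0 := by
  have h := SD_ker C hdim ![i, j, k]
  set K := LinearMap.ker ((LinearMap.funLeft F F ![i, j, k]).comp C.subtype) with hK
  have hne : K ≠ ⊥ := by
    intro e
    rw [e, finrank_bot] at h
    omega
  obtain ⟨d', hd', h0⟩ := Submodule.exists_mem_ne_zero_of_ne_bot hne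
  have hk : (LinearMap.funLeft F F ![i, j, k]).comp C.subtype d' = 0 := hd'
  refine ⟨d'.1, d'.2, by simpa using h0, ?_, ?_, ?_⟩
  · simpa using congrFun hk 0
  · simpa using congrFun hk 1
  · simpa using congrFun hk 2

/-- For a [q²+1, 4, q²−q] code C over GF(q), q ≥ 4 a prime power, the
distinct supports of the codewords of weight q²−q form a
3-(q²+1, q²−q, (q−2)(q²−q−1)) design. -/
theorem supports_of_min_weight_codewords_form_design {q : ℕ}
    (F : Type) [Field F] [Fintype F] [DecidableEq F]
    (hF : Fintype.card F = q) (hq : 4 ≤ q)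
    (C : Submodule F (Fin (q ^ 2 + 1) → F))
    (hdim : Module.finrank F C = 4)
    (hlb : ∀ c ∈ C, c ≠ 0 → q ^ 2 - q ≤ hammingNorm c)
    (hex : ∃ c ∈ C, c ≠ 0 ∧ hammingNorm c = q ^ 2 - q) :
    let B : Set (Set (Fin (q ^ 2 + 1))) :=
      {b | ∃ c ∈ C, hammingNorm c = q ^ 2 - q ∧ b = {i | c i ≠ 0}}
    (∀ b ∈ B, b.ncard = q ^ 2 - q) ∧
    (∀ T : Finset (Fin (q ^ 2 + 1)), T.card = 3 →
      {b ∈ B | ↑T ⊆ b}.ncard = (q - 2) * (q ^ 2 - q - 1)) := by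
  classical
  intro B
  have hqq : q + q ≤ q ^ 2 := by nlinarith
  have hwz : ∀ c : Fin (q ^ 2 + 1) → F,
      hammingNorm c + Finset.card {i | c i = 0} = q ^ 2 + 1 := by
    intro c
    have := Finset.card_filter_add_card_filter_not (s := Finset.univ) (fun i => c i = 0)
    rw [Finset.card_univ, Fintype.card_fin] at this
    unfold hammingNorm
    rw [add_comm]
    exact this
  constructor
  · rintro b ⟨c, hc, hw, rfl⟩
    rw [← hw]
    unfold hammingNorm
    rw [← Set.ncard_coe_finset]
    simp
  intro T hT
  have hz : ∀ c ∈ C, c ≠ 0 → Finset.card {i | c i = 0} ≤ q + 1 := by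
    intro c hc h0
    have := hlb c hc h0
    have := hwz c
    omega
  have hpen := SD_pencil hF hq C hz
  let P : Finset (Finset (Fin (q ^ 2 + 1))) :=
    Finset.univ.filter fun Z => ∃ c ∈ C, hammingNorm c = q ^ 2 - q ∧ Z = Finset.univ.filter (fun i => c i = 0)
  have hcard : ∀ Z ∈ P, Z.card = q + 1 := by
    intro Z hZ
    simp only [P, Finset.mem_filter, Finset.mem_univ, true_and] at hZ
    obtain ⟨c, hc, hw, rfl⟩ := hZ
    have := hwz c
    omega
  have huniq : ∀ i j k, i ≠ j → i ≠ k → j ≠ k →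
      (P.filter (fun Z => i ∈ Z ∧ j ∈ Z ∧ k ∈ Z)).card = 1 := by
    intro i j k hij hik hjk
    obtain ⟨c, hc, hc0, hci, hcj, hck⟩ := SD_three C hdim i j k
    have hcz : Finset.card {x | c x = 0} = q + 1 := by
      obtain ⟨d, hd, hdi, hdj, hind⟩ := SD_two C hdim i j c hc0
      have h := hpen c d hc hd hind
      refine h.2 (le_antisymm h.1 ?_)
      refine (Finset.card_pair hij).ge.trans ?_
      apply Finset.card_le_card
      intro x hx
      simp only [Finset.mem_insert, Finset.mem_singleton] at hx
      rcases hx with rfl | rfl <;> simp [*]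
    rw [Finset.card_eq_one]
    refine ⟨Finset.univ.filter (fun x => c x = 0), ?_⟩
    ext Z
    simp only [P, Finset.mem_filter, Finset.mem_univ, true_and, Finset.mem_singleton]
    constructor
    · rintro ⟨⟨d, hd, hw, rfl⟩, hi, hj, hk⟩
      simp only [Finset.mem_filter, Finset.mem_univ, true_and] at hi hj hk
      have hd0 : d ≠ 0 := by
        rintro rfl
        rw [hammingNorm_zero] at hw
        omega
      have hdep : ¬ ∀ a b : F, a • c + b • d = 0 → a = 0 ∧ b = 0 := by
        intro hind
        have h := (hpen c d hc hd hind).1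
        have h3 : ({i, j, k} : Finset (Fin (q ^ 2 + 1))).card = 3 :=
          Finset.card_eq_three.2 ⟨i, j, k, hij, hik, hjk, rfl⟩
        have : ({i, j, k} : Finset (Fin (q ^ 2 + 1))) ⊆
            Finset.univ.filter (fun x => c x = 0 ∧ d x = 0) := by
          intro x hx
          simp only [Finset.mem_insert, Finset.mem_singleton] at hx
          rcases hx with rfl | rfl | rfl <;> simp [*]
        have := Finset.card_le_card this
        omega
      push Not at hdep
      obtain ⟨a, b, hab, hne⟩ := hdep
      have ha : a ≠ 0 := by
        rintro rfl
        have := hne rfl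
        simp [this, hd0] at hab
      have hb : b ≠ 0 := by
        rintro rfl
        simp [ha, hc0] at hab
      ext x
      have hx := congrFun hab x
      simp only [Pi.add_apply, Pi.smul_apply, smul_eq_mul, Pi.zero_apply] at hx
      simp only [Finset.mem_filter, Finset.mem_univ, true_and]
      constructor
      · intro e
        simpa [e, ha] using hx
      · intro e
        simpa [e, hb] using hx
    · rintro rfl
      refine ⟨⟨c, hc, ?_, rfl⟩, by simpa using hci, by simpa using hcj, by simpa using hck⟩
      have := hwz c
      omega
  obtain ⟨i, j, k, hij, hik, hjk, rfl⟩ := Finset.card_eq_three.1 hT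
  rw [← SD_steiner q hq (by simp) P hcard huniq i j k hij hik hjk, ← Set.ncard_coe_finset]
  symm
  refine Set.ncard_congr (fun Z _ => ((Zᶜ : Finset (Fin (q ^ 2 + 1))) : Set (Fin (q ^ 2 + 1)))) ?_ ?_ ?_
  · intro Z hZ
    simp only [P, Finset.coe_filter, Finset.mem_filter, Finset.mem_univ, true_and,
      Set.mem_ofPred_eq] at hZ
    obtain ⟨⟨c, hc, hw, rfl⟩, hi, hj, hk⟩ := hZ
    refine ⟨⟨c, hc, hw, ?_⟩, ?_⟩
    · ext x; simp
    · intro x hx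
      simp only [Finset.coe_insert, Finset.coe_singleton, Set.mem_insert_iff,
        Set.mem_singleton_iff] at hx
      rw [Finset.mem_coe, Finset.mem_compl]
      rcases hx with rfl | rfl | rfl <;> assumption
  · intro Z Z' _ _ h
    exact compl_injective (Finset.coe_injective h)
  · rintro b ⟨⟨c, hc, hw, rfl⟩, hT'⟩
    refine ⟨Finset.univ.filter (fun x => c x = 0), ?_, ?_⟩
    · simp only [P, Finset.coe_filter, Finset.mem_filter, Finset.mem_univ, true_and,
        Set.mem_ofPred_eq]
      refine ⟨⟨c, hc, hw, rfl⟩, ?_, ?_, ?_⟩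
      · exact hT' (by simp)
      · exact hT' (by simp)
      · exact hT' (by simp)
    · ext x; simp
end

section
/- Let q ≥ 4 be a prime power and let C be a linear code over GF(q) with parameters [q²+1, 4, q²−q]. Let B be the collection of distinct supports of codewords of C of Hamming weight q²−q, and let B^c = { complement of B in the coordinate set : B ∈ B }. Then every member of B^c has cardinality q+1, and for every 3-element subset T of the coordinate set there is exactly one member of B^c containing T; that is, (coordinate set, B^c) is a 3-(q²+1, q+1, 1) Steiner system (an inversive plane). -/
/-- The number of zero coordinates of a word. -/
def zeroCount {F : Type} [Field F] [DecidableEq F] {n : ℕ} (c : Fin n → F) : ℕ :=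
  (Finset.univ.filter (fun i => c i = 0)).card

lemma zeroCount_add_norm {F : Type} [Field F] [DecidableEq F] {n : ℕ} (c : Fin n → F) :
    zeroCount c + hammingNorm c = n := by
  unfold zeroCount hammingNorm
  have := Finset.card_filter_add_card_filter_not (s := (Finset.univ : Finset (Fin n)))
    (fun i => c i = 0)
  simpa using this

/-- Counting zeros in a pencil of codewords. -/
lemma pencil_count {F : Type} [Field F] [Fintype F] [DecidableEq F] {n : ℕ}
    (c d : Fin n → F) :
    (∑ a : F, zeroCount (c + a • d)) + zeroCount d =
      n + Fintype.card F * (Finset.univ.filter (fun i => c i = 0 ∧ d i = 0)).card := by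
  unfold zeroCount
  simp only [Finset.card_filter]
  rw [Finset.sum_comm, ← Finset.sum_add_distrib, Finset.mul_sum]
  have hn : n = ∑ _i : Fin n, 1 := by simp
  refine Eq.trans ?_ (congrArg (· + _) hn.symm)
  rw [← Finset.sum_add_distrib]
  refine Finset.sum_congr rfl fun i _ => ?_
  simp only [Pi.add_apply, Pi.smul_apply, smul_eq_mul]
  by_cases hd : d i = 0
  · by_cases hc : c i = 0
    · simp [hd, hc, add_comm]
    · simp [hd, hc]
  · have : ∀ a : F, (c i + a * d i = 0) ↔ a = - c i / d i := by
      intro a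
      rw [eq_div_iff hd]
      constructor
      · intro h; linear_combination h
      · intro h; linear_combination h
    simp [this, hd]

/-- In a 4-dimensional code, some nonzero codeword vanishes at three given places. -/
lemma exists_vanishing {F : Type} [Field F] {n : ℕ}
    (C : Submodule F (Fin n → F)) (hdim : Module.finrank F C = 4) (i j k : Fin n) :
    ∃ c ∈ C, c ≠ 0 ∧ c i = 0 ∧ c j = 0 ∧ c k = 0 := by
  let f : C →ₗ[F] (Fin 3 → F) :=
    (LinearMap.funLeft F F ![i, j, k]).comp C.subtype
  have hker : LinearMap.ker f ≠ ⊥ := by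
    apply LinearMap.ker_ne_bot_of_finrank_lt
    simp [hdim]
  obtain ⟨x, hx, hx0⟩ := Submodule.exists_mem_ne_zero_of_ne_bot hker
  have hf : f x = 0 := hx
  refine ⟨x, x.2, by simpa using hx0, ?_, ?_, ?_⟩
  · exact congrFun hf 0
  · exact congrFun hf 1
  · exact congrFun hf 2

/-- For a [q²+1, 4, q²−q] code C over GF(q), q ≥ 4 a prime power, the
complements of the distinct supports of the codewords of weight q²−q form a
3-(q²+1, q+1, 1) Steiner system (an inversive plane). -/
theorem complements_of_supports_form_inversive_plane {q : ℕ}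
    (F : Type) [Field F] [Fintype F] [DecidableEq F]
    (hF : Fintype.card F = q) (hq : 4 ≤ q)
    (C : Submodule F (Fin (q ^ 2 + 1) → F))
    (hdim : Module.finrank F C = 4)
    (hlb : ∀ c ∈ C, c ≠ 0 → q ^ 2 - q ≤ hammingNorm c)
    (hex : ∃ c ∈ C, c ≠ 0 ∧ hammingNorm c = q ^ 2 - q) :
    let Bc : Set (Set (Fin (q ^ 2 + 1))) :=
      {b | ∃ c ∈ C, hammingNorm c = q ^ 2 - q ∧ b = {i | c i ≠ 0}ᶜ}
    (∀ b ∈ Bc, b.ncard = q + 1) ∧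
    (∀ T : Finset (Fin (q ^ 2 + 1)), T.card = 3 →
      {b ∈ Bc | ↑T ⊆ b}.ncard = 1) := by
  intro Bc
  have hqq : q ≤ q ^ 2 := by nlinarith
  have hzle : ∀ c ∈ C, c ≠ 0 → zeroCount c ≤ q + 1 := by
    intro c hc h0
    have h1 := hlb c hc h0
    have h2 := zeroCount_add_norm c
    omega
  have hset : ∀ c : Fin (q ^ 2 + 1) → F, ({i | c i ≠ 0}ᶜ : Set _) =
      ↑(Finset.univ.filter (fun i => c i = 0)) := by
    intro c; ext i; simp
  -- the upper bound for pencils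
  have hpencil : ∀ c ∈ C, ∀ d ∈ C, d ≠ 0 → (∀ a : F, c + a • d ≠ 0) →
      (Finset.univ.filter (fun i => c i = 0 ∧ d i = 0)).card ≤ 2 := by
    intro c hc d hd hd0 h
    have h1 := pencil_count c d
    have h2 : ∑ a : F, zeroCount (c + a • d) ≤ ∑ _a : F, (q + 1) :=
      Finset.sum_le_sum fun a _ => hzle _ (C.add_mem hc (C.smul_mem a hd)) (h a)
    have h3 := hzle d hd hd0
    simp only [Finset.sum_const, Finset.card_univ, hF, smul_eq_mul] at h1 h2
    by_contra! h4
    have : q * 3 ≤ q * (Finset.univ.filter (fun i => c i = 0 ∧ d i = 0)).card :=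
      Nat.mul_le_mul_left _ h4
    nlinarith
  refine ⟨?_, ?_⟩
  · rintro b ⟨c, hc, hw, rfl⟩
    rw [hset, Set.ncard_coe_finset]
    have h2 := zeroCount_add_norm c
    unfold zeroCount at h2
    omega
  · intro T hT
    obtain ⟨i, j, k, hij, hik, hjk, rfl⟩ := Finset.card_eq_three.mp hT
    obtain ⟨c, hc, hc0, hci, hcj, hck⟩ := exists_vanishing C hdim i j k
    have hwt : hammingNorm c = q ^ 2 - q := by
      obtain ⟨l, hl⟩ := Function.ne_iff.mp hc0
      obtain ⟨d, hd, hd0, hdi, hdj, hdl⟩ := exists_vanishing C hdim i j l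
      have hne : ∀ a : F, c + a • d ≠ 0 := by
        intro a h
        have := congrFun h l
        simp [hdl] at this
        exact hl this
      have h1 := pencil_count c d
      have h3 := hzle d hd hd0
      have hS : 2 ≤ (Finset.univ.filter (fun i => c i = 0 ∧ d i = 0)).card := by
        refine (Finset.card_pair hij).symm.le.trans (Finset.card_le_card ?_)
        intro x hx
        simp only [Finset.mem_insert, Finset.mem_singleton] at hx
        rcases hx with rfl | rfl <;> simp [*]
      have h5 : q * 2 ≤ q * (Finset.univ.filter (fun i => c i = 0 ∧ d i = 0)).card :=
        Nat.mul_le_mul_left _ hS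
      have h6 : zeroCount c = q + 1 := by
        by_contra hlt
        have hlt' : zeroCount c < q + 1 := lt_of_le_of_ne (hzle c hc hc0) hlt
        have h2 : ∑ a : F, zeroCount (c + a • d) < ∑ _a : F, (q + 1) :=
          Finset.sum_lt_sum (fun a _ => hzle _ (C.add_mem hc (C.smul_mem a hd)) (hne a))
            ⟨0, Finset.mem_univ _, by simpa using hlt'⟩
        simp only [Finset.sum_const, Finset.card_univ, hF, smul_eq_mul] at h1 h2
        nlinarith
      have h7 := zeroCount_add_norm c
      omega
    rw [Set.ncard_eq_one]
    refine ⟨{i | c i ≠ 0}ᶜ, ?_⟩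
    ext b
    simp only [Set.mem_setOf_eq, Set.mem_singleton_iff]
    constructor
    · rintro ⟨⟨d, hd, hdw, rfl⟩, hsub⟩
      have hd0 : d ≠ 0 := by
        rintro rfl
        rw [hammingNorm_zero] at hdw
        have : q < q ^ 2 := by nlinarith
        omega
      have hdi : d i = 0 := by simpa using @hsub i (by simp)
      have hdj : d j = 0 := by simpa using @hsub j (by simp)
      have hdk : d k = 0 := by simpa using @hsub k (by simp)
      have : ∃ a : F, c + a • d = 0 := by
        by_contra! h
        have h1 := hpencil c hc d hd hd0 h
        have : ({i, j, k} : Finset _).card ≤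
            (Finset.univ.filter (fun i => c i = 0 ∧ d i = 0)).card := by
          apply Finset.card_le_card
          intro x hx
          simp only [Finset.mem_insert, Finset.mem_singleton] at hx
          rcases hx with rfl | rfl | rfl <;> simp [*]
        omega
      obtain ⟨a, ha⟩ := this
      have ha0 : a ≠ 0 := by
        rintro rfl
        apply hc0
        simpa using ha
      ext x
      have hx := congrFun ha x
      simp only [Pi.add_apply, Pi.smul_apply, smul_eq_mul, Pi.zero_apply] at hx
      simp only [Set.mem_compl_iff, Set.mem_setOf_eq, not_not]
      constructor
      · intro h; simpa [h] using hx
      · intro h; simpa [h, ha0] using hx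
    · rintro rfl
      refine ⟨⟨c, hc, hwt, rfl⟩, ?_⟩
      intro x hx
      simp only [Finset.coe_insert, Finset.coe_singleton, Set.mem_insert_iff,
        Set.mem_singleton_iff] at hx
      rcases hx with rfl | rfl | rfl <;> simp [*]
end

section
/- Let q ≥ 4 be a prime power and let C be a linear code over GF(q) with parameters [q²+1, 4, q²−q]. Let D be the collection of distinct supports of codewords of the dual code C⊥ of Hamming weight 4. Then for every 3-element subset T of the coordinate set, the number of members of D containing T equals q−2; that is, (coordinate set, D) is a 3-(q²+1, 4, q−2) design. -/
/-- The dual code of a linear code `C ⊆ GF(q)ⁿ`: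
all vectors `x` with `∑ i, x i * c i = 0` for every `c ∈ C`. -/
def dualCode {n : ℕ} {F : Type} [Field F] (C : Submodule F (Fin n → F)) :
    Submodule F (Fin n → F) where
  carrier := {x | ∀ c ∈ C, ∑ i, x i * c i = 0}
  zero_mem' := by intro c hc; simp
  add_mem' := by
    intro a b ha hb c hc
    simp only [Set.mem_setOf_eq] at ha hb ⊢
    simp [Pi.add_apply, add_mul, Finset.sum_add_distrib, ha c hc, hb c hc]
  smul_mem' := by
    intro r x hx c hc
    simp only [Set.mem_setOf_eq] at hx ⊢
    simp [Pi.smul_apply, smul_eq_mul, mul_assoc, ← Finset.mul_sum, hx c hc]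

open Finset in
theorem zeros_card_le {q : ℕ} {F : Type} [Field F] [DecidableEq F] (hq : 4 ≤ q)
    (c : Fin (q ^ 2 + 1) → F) (h : q ^ 2 - q ≤ hammingNorm c) :
    (univ.filter fun i => c i = 0).card ≤ q + 1 := by
  have h1 := Finset.card_filter_add_card_filter_not (s := (univ : Finset (Fin (q ^ 2 + 1))))
    (fun i => c i = 0)
  simp only [Finset.card_univ, Fintype.card_fin] at h1
  have h2 : hammingNorm c = (univ.filter fun i => ¬ c i = 0).card := rfl
  have h3 : q ≤ q ^ 2 := by nlinarith
  omega

theorem le_card_ker {q : ℕ} {F V : Type} [Field F] [Fintype F] [AddCommGroup V] [Module F V]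
    [Fintype V] (hF : Fintype.card F = q) (hV : Module.finrank F V = 2) (f : V →ₗ[F] F) :
    q ≤ Nat.card (LinearMap.ker f) := by
  have h1 := LinearMap.finrank_range_add_finrank_ker f
  have h2 : Module.finrank F (LinearMap.range f) ≤ 1 := by
    simpa using Submodule.finrank_le (LinearMap.range f)
  have h3 := Module.natCard_eq_pow_finrank (K := F) (V := LinearMap.ker f)
  have h4 : 0 < q := by rw [← hF]; exact Fintype.card_pos
  rw [h3, Nat.card_eq_fintype_card, hF]
  exact Nat.le_self_pow (by omega) q

open Finset in
theorem double_count {q : ℕ} {F : Type} [Field F] [Fintype F] [DecidableEq F]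
    (hF : Fintype.card F = q) (hq : 4 ≤ q)
    (K : Submodule F (Fin (q ^ 2 + 1) → F)) (hK : Module.finrank F K = 2)
    (hlb : ∀ c ∈ K, c ≠ 0 → q ^ 2 - q ≤ hammingNorm c)
    (M : Finset (Fin (q ^ 2 + 1))) (hM : ∀ i ∈ M, ∀ c ∈ K, c i = 0) :
    M.card ≤ 2 ∧ (M.card = 2 → ∀ c ∈ K, c ≠ 0 →
      (univ.filter fun i => c i = 0).card = q + 1) := by
  classical
  have : Fintype K := Fintype.ofFinite K
  have hcardK : Fintype.card K = q ^ 2 := by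
    rw [Module.card_eq_pow_finrank (K := F), hK, hF]
  have hswap : ∑ c : K, (univ.filter fun i => c.1 i = 0).card
      = ∑ i, (univ.filter fun c : K => c.1 i = 0).card := by
    simp only [card_filter]
    exact sum_comm
  have hge : ∀ i, (if i ∈ M then q ^ 2 else q) ≤ (univ.filter fun c : K => c.1 i = 0).card := by
    intro i
    split_ifs with hi
    · rw [filter_true_of_mem (fun c _ => hM i hi c.1 c.2), card_univ, hcardK]
    · have := le_card_ker hF hK ((LinearMap.proj i).comp K.subtype)
      rw [← Fintype.card_subtype, ← Nat.card_eq_fintype_card]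
      exact this
  have hsum := sum_le_sum (fun i (_ : i ∈ (univ : Finset (Fin (q ^ 2 + 1)))) => hge i)
  rw [← hswap] at hsum
  have hL : (∑ i : Fin (q ^ 2 + 1), if i ∈ M then q ^ 2 else q)
      = M.card * q ^ 2 + (q ^ 2 + 1 - M.card) * q := by
    rw [sum_ite]
    simp [filter_not, card_sdiff]
  have hMn : M.card ≤ q ^ 2 + 1 := by simpa using card_le_univ M
  rw [hL, ← add_sum_erase univ _ (mem_univ (0 : K))] at hsum
  have h0 : (univ.filter fun i : Fin (q ^ 2 + 1) => (0 : K).1 i = 0).card = q ^ 2 + 1 := by simp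
  rw [h0] at hsum
  have hz : ∀ c ∈ (univ : Finset K).erase 0, (univ.filter fun i => c.1 i = 0).card ≤ q + 1 := by
    intro c hc
    exact zeros_card_le hq _ (hlb c.1 c.2 (by simpa using hc))
  have hE : ((univ : Finset K).erase 0).card = q ^ 2 - 1 := by
    rw [card_erase_of_mem (mem_univ _), card_univ, hcardK]
  have hub : ∑ c ∈ (univ : Finset K).erase 0, (q + 1) = (q ^ 2 - 1) * (q + 1) := by
    rw [sum_const, hE, smul_eq_mul]
  have h1 : 1 ≤ q ^ 2 := by nlinarith
  obtain ⟨r, hr⟩ := Nat.exists_eq_add_of_le hMn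
  have e1 : q ^ 2 + 1 - M.card = r := by omega
  obtain ⟨s, hs⟩ := Nat.exists_eq_add_of_le h1
  have e2 : q ^ 2 - 1 = s := by omega
  rw [e1] at hsum
  rw [e2] at hub
  refine ⟨?_, ?_⟩
  · have h2 := sum_le_sum hz
    rw [hub] at h2
    by_contra hcon
    push Not at hcon
    zify at *
    have e3 : (r : ℤ) = q ^ 2 + 1 - M.card := by linarith
    have e4 : (s : ℤ) = q ^ 2 - 1 := by linarith
    rw [e3] at hsum
    rw [e4] at h2
    have h5 : ((M.card : ℤ) - 2) * (q * (q - 1)) ≤ 0 := by nlinarith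
    have h6 : 0 < ((M.card : ℤ) - 2) * (q * (q - 1)) := by
      apply mul_pos
      · linarith
      · apply mul_pos <;> linarith
    linarith
  · intro hM2 c hc hc0
    by_contra hne
    have hmem : (⟨c, hc⟩ : K) ∈ (univ : Finset K).erase 0 := by
      simpa using hc0
    have hlt := sum_lt_sum hz ⟨⟨c, hc⟩, hmem, lt_of_le_of_ne (hz _ hmem) hne⟩
    rw [hub] at hlt
    rw [hM2] at hsum hr
    zify at hsum hlt hs hr
    have e3 : (r : ℤ) = q ^ 2 - 1 := by linarith
    have e4 : (s : ℤ) = q ^ 2 - 1 := by linarith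
    rw [e3] at hsum
    rw [e4] at hlt
    nlinarith

/-- restriction of codewords of `C` to a set of coordinates -/
def resMap {n : ℕ} {F : Type} [Field F] (C : Submodule F (Fin n → F)) (T : Finset (Fin n)) :
    C →ₗ[F] (T → F) :=
  (LinearMap.funLeft F F (fun t : T => (t : Fin n))).comp C.subtype

theorem resMap_apply {n : ℕ} {F : Type} [Field F] (C : Submodule F (Fin n → F))
    (T : Finset (Fin n)) (c : C) (t : T) : resMap C T c t = c.1 t := rfl

theorem mem_ker_resMap {n : ℕ} {F : Type} [Field F] (C : Submodule F (Fin n → F))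
    (T : Finset (Fin n)) (c : C) : c ∈ LinearMap.ker (resMap C T) ↔ ∀ t ∈ T, c.1 t = 0 := by
  rw [LinearMap.mem_ker, funext_iff]
  simp [resMap_apply]

theorem exists_sub_finrank {F V : Type} [Field F] [AddCommGroup V] [Module F V]
    [Module.Finite F V] (W : Submodule F V) (h : 2 ≤ Module.finrank F W) :
    ∃ K ≤ W, Module.finrank F K = 2 := by
  obtain ⟨f, hf⟩ := exists_linearIndependent_of_le_finrank h
  have hf' : LinearIndependent F (fun i => (f i : V)) :=
    hf.map' W.subtype (Submodule.ker_subtype W)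
  refine ⟨Submodule.span F (Set.range fun i => (f i : V)), ?_, ?_⟩
  · rw [Submodule.span_le]
    rintro _ ⟨i, rfl⟩
    exact (f i).2
  · simpa using finrank_span_eq_card hf'

section
variable {q : ℕ} {F : Type} [Field F] [Fintype F] [DecidableEq F]

theorem ker_three (hF : Fintype.card F = q) (hq : 4 ≤ q)
    (C : Submodule F (Fin (q ^ 2 + 1) → F)) (hdim : Module.finrank F C = 4)
    (hlb : ∀ c ∈ C, c ≠ 0 → q ^ 2 - q ≤ hammingNorm c)
    (T : Finset (Fin (q ^ 2 + 1))) (hT : T.card = 3) :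
    Module.finrank F (LinearMap.ker (resMap C T)) = 1 ∧ Function.Surjective (resMap C T) := by
  have h1 := LinearMap.finrank_range_add_finrank_ker (resMap C T)
  have h2 : Module.finrank F (LinearMap.range (resMap C T)) ≤ 3 := by
    simpa [hT] using Submodule.finrank_le (LinearMap.range (resMap C T))
  have h3 : Module.finrank F (LinearMap.ker (resMap C T)) < 2 := by
    by_contra hcon
    push Not at hcon
    obtain ⟨K, hK, hK2⟩ := exists_sub_finrank _ hcon
    have hm : ∀ c ∈ K.map C.subtype, ∃ h : c ∈ C, (⟨c, h⟩ : C) ∈ K := by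
      rintro _ ⟨c, hc, rfl⟩
      exact ⟨c.2, hc⟩
    have := (double_count hF hq (K.map C.subtype)
      (by rw [Submodule.finrank_map_subtype_eq, hK2])
      (fun c hc => hlb c (hm c hc).1) T (fun i hi c hc => by
        obtain ⟨h, hcK⟩ := hm c hc
        exact (mem_ker_resMap C T _).1 (hK hcK) i hi)).1
    omega
  refine ⟨by omega, ?_⟩
  rw [← LinearMap.range_eq_top]
  apply Submodule.eq_top_of_finrank_eq
  simp [hT]
  omega

theorem zeros_card_eq (hF : Fintype.card F = q) (hq : 4 ≤ q)
    (C : Submodule F (Fin (q ^ 2 + 1) → F)) (hdim : Module.finrank F C = 4)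
    (hlb : ∀ c ∈ C, c ≠ 0 → q ^ 2 - q ≤ hammingNorm c)
    (T : Finset (Fin (q ^ 2 + 1))) (hT : T.card = 3) (c : C) (hc0 : c ≠ 0)
    (hc : ∀ t ∈ T, c.1 t = 0) : (Finset.univ.filter fun i => c.1 i = 0).card = q + 1 := by
  obtain ⟨S, hST, hS⟩ := Finset.exists_subset_card_eq (s := T) (n := 2) (by omega)
  have hsurj := (ker_three hF hq C hdim hlb T hT).2
  have hsS : Function.Surjective (resMap C S) := by
    intro y
    obtain ⟨x, hx⟩ := hsurj (fun t => if h : t.1 ∈ S then y ⟨t, h⟩ else 0)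
    refine ⟨x, ?_⟩
    ext s
    have := congrFun hx ⟨s.1, hST s.2⟩
    simpa [resMap_apply] using this
  have h1 := LinearMap.finrank_range_add_finrank_ker (resMap C S)
  rw [LinearMap.range_eq_top.2 hsS, finrank_top] at h1
  simp [hS, hdim] at h1
  have hm : ∀ c ∈ (LinearMap.ker (resMap C S)).map C.subtype,
      ∃ h : c ∈ C, (⟨c, h⟩ : C) ∈ LinearMap.ker (resMap C S) := by
    rintro _ ⟨c, hc, rfl⟩
    exact ⟨c.2, hc⟩
  refine (double_count hF hq ((LinearMap.ker (resMap C S)).map C.subtype) ?_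
    (fun c hc => hlb c (hm c hc).1) S (fun i hi c hc => ?_)).2 hS c.1 ?_ ?_
  · rw [Submodule.finrank_map_subtype_eq]
    omega
  · obtain ⟨h, hcK⟩ := hm c hc
    exact (mem_ker_resMap C S _).1 hcK i hi
  · exact ⟨c, (mem_ker_resMap C S c).2 (fun t ht => hc t (hST ht)), rfl⟩
  · simpa using hc0

theorem exists_dual_word (hF : Fintype.card F = q) (hq : 4 ≤ q)
    (C : Submodule F (Fin (q ^ 2 + 1) → F)) (hdim : Module.finrank F C = 4)
    (hlb : ∀ c ∈ C, c ≠ 0 → q ^ 2 - q ≤ hammingNorm c)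
    (T : Finset (Fin (q ^ 2 + 1))) (hT : T.card = 3) (c0 : C) (hc0 : c0 ≠ 0)
    (hc : ∀ t ∈ T, c0.1 t = 0) (j : Fin (q ^ 2 + 1)) (hjT : j ∉ T) (hj : c0.1 j = 0) :
    ∃ x ∈ dualCode C, ∀ i, x i ≠ 0 ↔ i ∈ insert j T := by
  have key : ∀ S : Finset (Fin (q ^ 2 + 1)), S.card = 3 → (∀ t ∈ S, c0.1 t = 0) →
      ∀ c : C, (∀ t ∈ S, c.1 t = 0) → ∃ a : F, a • c0 = c := by
    intro S hS h0 c hcS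
    have h1 := (ker_three hF hq C hdim hlb S hS).1
    have := (finrank_eq_one_iff_of_nonzero' (⟨c0, (mem_ker_resMap C S c0).2 h0⟩ :
      LinearMap.ker (resMap C S)) (by simpa using hc0)).1 h1
      ⟨c, (mem_ker_resMap C S c).2 hcS⟩
    obtain ⟨a, ha⟩ := this
    exact ⟨a, congrArg Subtype.val ha⟩
  have hsurj := (ker_three hF hq C hdim hlb T hT).2
  have hu : ∀ t : Fin (q ^ 2 + 1), ∃ u : C, ∀ s ∈ T, u.1 s = if s = t then 1 else 0 := by
    intro t
    obtain ⟨u, hu⟩ := hsurj (fun s => if s.1 = t then 1 else 0)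
    exact ⟨u, fun s hs => congrFun hu ⟨s, hs⟩⟩
  choose u hu using hu
  have hune : ∀ t ∈ T, (u t).1 j ≠ 0 := by
    intro t ht h0
    obtain ⟨a, ha⟩ := key (insert j (T.erase t))
      (by rw [Finset.card_insert_of_notMem (by simp [hjT]), Finset.card_erase_of_mem ht, hT])
      (by
        intro s hs
        rcases Finset.mem_insert.1 hs with rfl | hs
        · exact hj
        · exact hc s (Finset.mem_of_mem_erase hs)) (u t)
      (by
        intro s hs
        rcases Finset.mem_insert.1 hs with rfl | hs
        · exact h0
        · rw [hu t s (Finset.mem_of_mem_erase hs), if_neg (Finset.ne_of_mem_erase hs)])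
    have h1 := hu t t ht
    rw [← ha] at h1
    simp [hc t ht] at h1
  refine ⟨fun i => if i = j then 1 else if i ∈ T then - (u i).1 j else 0, ?_, ?_⟩
  · intro c hcC
    obtain ⟨a, ha⟩ := key T hT hc (⟨c, hcC⟩ - ∑ t ∈ T, c t • u t) (by
      intro s hs
      simp only [Submodule.coe_sub, Submodule.coe_sum, Submodule.coe_smul, Pi.sub_apply,
        Finset.sum_apply, Pi.smul_apply, smul_eq_mul]
      rw [Finset.sum_congr rfl (fun t _ => by rw [hu t s hs])]
      simp [hs])
    have h2 := congrArg (fun z : C => z.1 j) ha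
    simp only [Submodule.coe_sub, Submodule.coe_sum, Submodule.coe_smul, Pi.sub_apply,
        Finset.sum_apply, Pi.smul_apply, smul_eq_mul, hj, mul_zero] at h2
    have h3 : ∀ i, (if i = j then 1 else if i ∈ T then - (u i).1 j else 0) * c i
        = (if i = j then c i else 0) - (if i ∈ T then c i * (u i).1 j else 0) := by
      intro i
      by_cases h : i = j
      · subst h; simp [hjT]
      · by_cases h' : i ∈ T <;> simp [h, h', mul_comm]
    rw [Finset.sum_congr rfl (fun i _ => h3 i), Finset.sum_sub_distrib]
    simpa using h2.symm
  · intro i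
    by_cases h : i = j
    · simp [h]
    · by_cases h' : i ∈ T
      · simp [h, h', hune i h']
      · simp [h, h']

end

/-- For a [q²+1, 4, q²−q] code C over GF(q), q ≥ 4 a prime power, the
distinct supports of the weight-4 codewords of the dual code C⊥ form a
3-(q²+1, 4, q−2) design. -/
theorem supports_of_weight_four_dual_codewords_form_design {q : ℕ}
    (F : Type) [Field F] [Fintype F] [DecidableEq F]
    (hF : Fintype.card F = q) (hq : 4 ≤ q)
    (C : Submodule F (Fin (q ^ 2 + 1) → F))
    (hdim : Module.finrank F C = 4)
    (hlb : ∀ c ∈ C, c ≠ 0 → q ^ 2 - q ≤ hammingNorm c)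
    (hex : ∃ c ∈ C, c ≠ 0 ∧ hammingNorm c = q ^ 2 - q) :
    let D : Set (Set (Fin (q ^ 2 + 1))) :=
      {b | ∃ x ∈ dualCode C, hammingNorm x = 4 ∧ b = {i | x i ≠ 0}}
    (∀ b ∈ D, b.ncard = 4) ∧
    (∀ T : Finset (Fin (q ^ 2 + 1)), T.card = 3 →
      {b ∈ D | ↑T ⊆ b}.ncard = q - 2) := by
  intro D
  have hsupp : ∀ x : Fin (q ^ 2 + 1) → F,
      ({i | x i ≠ 0} : Set (Fin (q ^ 2 + 1))).ncard = hammingNorm x := by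
    intro x
    have : ({i | x i ≠ 0} : Set (Fin (q ^ 2 + 1)))
        = ((Finset.univ.filter fun i => x i ≠ 0 : Finset _) : Set _) := by ext; simp
    rw [this, Set.ncard_coe_finset]
    rfl
  refine ⟨?_, ?_⟩
  · rintro b ⟨x, _, hx4, rfl⟩
    rw [hsupp, hx4]
  · intro T hT
    have hk := (ker_three hF hq C hdim hlb T hT).1
    obtain ⟨c1, hc1⟩ : ∃ c : LinearMap.ker (resMap C T), c ≠ 0 := by
      have : Nontrivial (LinearMap.ker (resMap C T)) :=
        Module.nontrivial_of_finrank_pos (R := F) (by omega)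
      exact exists_ne 0
    obtain ⟨c0, hcT⟩ := c1
    have hc0 : c0 ≠ 0 := by simpa using hc1
    rw [mem_ker_resMap] at hcT
    have hz := zeros_card_eq hF hq C hdim hlb T hT c0 hc0 hcT
    set Z := Finset.univ.filter fun i => c0.1 i = 0 with hZ
    have hTZ : T ⊆ Z := fun t ht => by simp [hZ, hcT t ht]
    have himg : {b ∈ D | ↑T ⊆ b} =
        (fun j => ((insert j T : Finset (Fin (q ^ 2 + 1))) : Set (Fin (q ^ 2 + 1)))) ''
          ((Z \ T : Finset (Fin (q ^ 2 + 1))) : Set (Fin (q ^ 2 + 1))) := by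
      ext b
      constructor
      · rintro ⟨⟨x, hx, hx4, rfl⟩, hTb⟩
        have hsub : T ⊆ Finset.univ.filter fun i => x i ≠ 0 := by
          intro t ht
          simpa using hTb ht
        have hcard : (Finset.univ.filter fun i => x i ≠ 0).card = T.card + 1 := by
          rw [hT]; exact hx4
        obtain ⟨j, hj, hins⟩ := (Finset.covBy_iff_exists_insert.1
          (Finset.covBy_iff_card_sdiff_eq_one.2 ⟨hsub, by
            rw [Finset.card_sdiff_of_subset hsub]; omega⟩))
        refine ⟨j, ?_, ?_⟩
        · have hxj : x j ≠ 0 := by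
            have : j ∈ Finset.univ.filter fun i => x i ≠ 0 := by
              rw [← hins]; exact Finset.mem_insert_self _ _
            simpa using this
          have h0 : ∑ i, x i * c0.1 i = 0 := hx c0.1 c0.2
          rw [Finset.sum_eq_single j] at h0
          · have : c0.1 j = 0 := by
              rcases mul_eq_zero.1 h0 with h | h
              · exact absurd h hxj
              · exact h
            simp [hZ, this, hj]
          · intro i _ hij
            by_cases hxi : x i = 0
            · simp [hxi]
            · have : i ∈ insert j T := by rw [hins]; simpa using hxi
              rcases Finset.mem_insert.1 this with h | h
              · exact absurd h hij
              · rw [hcT i h, mul_zero]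
          · simp
        · simp only
          rw [hins]
          ext i
          simp
      · rintro ⟨j, hj, rfl⟩
        have hj' : c0.1 j = 0 ∧ j ∉ T := by simpa [hZ] using hj
        obtain ⟨x, hx, hxs⟩ := exists_dual_word hF hq C hdim hlb T hT c0 hc0 hcT j hj'.2 hj'.1
        refine ⟨⟨x, hx, ?_, ?_⟩, ?_⟩
        · have : (Finset.univ.filter fun i => x i ≠ 0) = insert j T := by
            ext i
            simp only [Finset.mem_filter, Finset.mem_univ, true_and]
            exact hxs i
          change (Finset.univ.filter fun i => x i ≠ 0).card = 4
          rw [this, Finset.card_insert_of_notMem hj'.2, hT]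
        · ext i
          exact (hxs i).symm
        · exact Finset.coe_subset.2 (Finset.subset_insert j T)
    rw [himg, Set.InjOn.ncard_image, Set.ncard_coe_finset, Finset.card_sdiff_of_subset hTZ, hz, hT]
    · omega
    · intro a ha b hb hab
      have ha' : a ∉ T := by simp at ha; exact ha.2
      have hab' : insert a T = insert b T := Finset.coe_injective hab
      have : a ∈ insert b T := by rw [← hab']; exact Finset.mem_insert_self _ _
      rcases Finset.mem_insert.1 this with h | h
      · exact h
      · exact absurd h ha'
end

section
/- Let q > 2 be a prime power and let a ∈ GF(q) be such that the polynomial x² + x + a has no root in GF(q). Consider the set of vectors V = {(0,0,1,0)} ∪ {(x, y, x² + xy + a y², 1) : x, y ∈ GF(q)} in GF(q)^4. Then V consists of q²+1 vectors which are pairwise non-proportional over GF(q), and any three distinct vectors in V are linearly independent over GF(q); hence V spans an ovoid (the elliptic quadric) in PG(3,q). -/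
/-- The quadratic form whose zero set is the elliptic quadric. -/
def ovG {F : Type} [Field F] (a : F) (w : Fin 4 → F) : F :=
  w 0 ^ 2 + w 0 * w 1 + a * w 1 ^ 2 - w 2 * w 3

/-- The polar form of `ovG`. -/
def ovB {F : Type} [Field F] (a : F) (u v : Fin 4 → F) : F :=
  2 * (u 0 * v 0) + u 0 * v 1 + v 0 * u 1 + 2 * a * (u 1 * v 1) - u 2 * v 3 - v 2 * u 3

theorem ov_step {F : Type} [Field F] (a : F) (u v w : Fin 4 → F) (s t r : F)
    (hu : ovG a u = 0) (hv : ovG a v = 0) (hw : ovG a w = 0) (hB : ovB a u v ≠ 0)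
    (h : ∀ i, s * u i + t * v i + r * w i = 0) : s = 0 ∨ t = 0 := by
  have key : s * t * ovB a u v = 0 := by
    have h1 : ovG a (fun i => s * u i + t * v i) = r ^ 2 * ovG a w := by
      have e : (fun i => s * u i + t * v i) = fun i => -(r * w i) := by
        funext i
        linear_combination h i
      rw [e]
      simp only [ovG]
      ring
    have h2 : ovG a (fun i => s * u i + t * v i)
        = s ^ 2 * ovG a u + t ^ 2 * ovG a v + s * t * ovB a u v := by
      simp only [ovG, ovB]
      ring
    rw [h1, hu, hv, hw] at h2
    linear_combination -h2
  rcases mul_eq_zero.1 key with h | h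
  · exact mul_eq_zero.1 h
  · exact absurd h hB

theorem ov_aniso {F : Type} [Field F] (a : F) (ha : ∀ x : F, x ^ 2 + x + a ≠ 0) (x y : F)
    (h : x ^ 2 + x * y + a * y ^ 2 = 0) : x = 0 ∧ y = 0 := by
  by_cases hy : y = 0
  · subst hy
    simpa using h
  · exfalso
    apply ha (x / y)
    field_simp
    linear_combination h

/-- For q > 2 a prime power and a ∈ GF(q) with x² + x + a having no root
in GF(q), the set V = {(0,0,1,0)} ∪ {(x, y, x²+xy+ay², 1) : x, y ∈ GF(q)} consists of
q²+1 pairwise non-proportional vectors in GF(q)⁴, any three distinct of which are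
linearly independent; hence V spans an ovoid (the elliptic quadric) in PG(3,q). -/
theorem elliptic_quadric_is_ovoid {q : ℕ} (F : Type) [Field F] [Fintype F]
    (hF : Fintype.card F = q) (hq : 2 < q)
    (a : F) (ha : ∀ x : F, x ^ 2 + x + a ≠ 0) :
    let V : Set (Fin 4 → F) :=
      insert ![0, 0, 1, 0] {w | ∃ x y : F, w = ![x, y, x ^ 2 + x * y + a * y ^ 2, 1]}
    V.ncard = q ^ 2 + 1 ∧
    (∀ u ∈ V, ∀ v ∈ V, u ≠ v → ∀ c : F, v ≠ c • u) ∧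
    (∀ u ∈ V, ∀ v ∈ V, ∀ w ∈ V, u ≠ v → u ≠ w → v ≠ w →
      LinearIndependent F ![u, v, w]) := by
  intro V
  have hG : ∀ u ∈ V, ovG a u = 0 := by
    rintro u (rfl | ⟨x, y, rfl⟩) <;> simp [ovG]
  have hB : ∀ u ∈ V, ∀ v ∈ V, u ≠ v → ovB a u v ≠ 0 := by
    rintro u (rfl | ⟨x, y, rfl⟩) v (rfl | ⟨x', y', rfl⟩) huv
    · exact absurd rfl huv
    · simp [ovB]
    · simp [ovB]
    · intro h
      simp [ovB] at h
      obtain ⟨h1, h2⟩ := ov_aniso a ha (x - x') (y - y') (by linear_combination -h)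
      apply huv
      rw [sub_eq_zero.1 h1, sub_eq_zero.1 h2]
  have h0 : ∀ u ∈ V, ∀ c : F, (∀ i, c * u i = 0) → c = 0 := by
    rintro u (rfl | ⟨x, y, rfl⟩) c h
    · simpa using h 2
    · simpa using h 3
  refine ⟨?_, ?_, ?_⟩
  · have hr : {w : Fin 4 → F | ∃ x y : F, w = ![x, y, x ^ 2 + x * y + a * y ^ 2, 1]}
        = Set.range (fun p : F × F =>
          ![p.1, p.2, p.1 ^ 2 + p.1 * p.2 + a * p.2 ^ 2, 1]) := by
      ext w
      simp [eq_comm]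
    have hinj : Function.Injective (fun p : F × F =>
          ![p.1, p.2, p.1 ^ 2 + p.1 * p.2 + a * p.2 ^ 2, 1]) := by
      intro p p' h
      exact Prod.ext (by simpa using congrFun h 0) (by simpa using congrFun h 1)
    have hn : ![0, 0, 1, 0] ∉
        {w : Fin 4 → F | ∃ x y : F, w = ![x, y, x ^ 2 + x * y + a * y ^ 2, 1]} := by
      rintro ⟨x, y, h⟩
      simpa using congrFun h 3
    rw [Set.ncard_insert_of_notMem hn (Set.toFinite _), hr, ← Set.image_univ,
      Set.ncard_image_of_injective _ hinj, Set.ncard_univ, Nat.card_eq_fintype_card,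
      Fintype.card_prod, hF, sq]
  · intro u hu v hv huv c hc
    apply hB u hu v hv huv
    have : ovB a u (c • u) = 2 * c * ovG a u := by
      simp only [ovB, ovG, Pi.smul_apply, smul_eq_mul]
      ring
    rw [hc, this, hG u hu, mul_zero]
  · intro u hu v hv w hw huv huw hvw
    rw [Fintype.linearIndependent_iff]
    intro g hg
    have h : ∀ i, g 0 * u i + g 1 * v i + g 2 * w i = 0 := by
      intro i
      simpa [Fin.sum_univ_three] using congrFun hg i
    have h1 := ov_step a u v w _ _ _ (hG u hu) (hG v hv) (hG w hw) (hB u hu v hv huv) h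
    have h2 := ov_step a u w v (g 0) (g 2) (g 1) (hG u hu) (hG w hw) (hG v hv)
      (hB u hu w hw huw) (fun i => by linear_combination h i)
    have h3 := ov_step a v w u (g 1) (g 2) (g 0) (hG v hv) (hG w hw) (hG u hu)
      (hB v hv w hw hvw) (fun i => by linear_combination h i)
    have hall : g 0 = 0 ∧ g 1 = 0 ∧ g 2 = 0 := by
      have k0 : g 1 = 0 → g 2 = 0 → g 0 = 0 := fun e f =>
        h0 u hu _ (fun i => by simpa [e, f] using h i)
      have k1 : g 0 = 0 → g 2 = 0 → g 1 = 0 := fun e f =>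
        h0 v hv _ (fun i => by simpa [e, f] using h i)
      have k2 : g 0 = 0 → g 1 = 0 → g 2 = 0 := fun e f =>
        h0 w hw _ (fun i => by simpa [e, f] using h i)
      tauto
    intro i
    fin_cases i
    · exact hall.1
    · exact hall.2.1
    · exact hall.2.2
end

section
/- Let q = 2^{2e+1} with e ≥ 1 and put σ = 2^{e+1}. Consider the set of vectors T = {(0,0,1,0)} ∪ {(x, y, x^σ + xy + y^{σ+2}, 1) : x, y ∈ GF(q)} in GF(q)^4. Then T consists of q²+1 vectors which are pairwise non-proportional over GF(q), and any three distinct vectors in T are linearly independent over GF(q); hence T spans an ovoid (the Tits ovoid) in PG(3,q). -/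
theorem tits_norm_form {F : Type} [Field F] [CharP F 2] (g : F →+* F)
    (hg : ∀ x, g (g x) = x ^ 2) (t w : F) (h0 : t ≠ 0) (h1 : t ≠ 1)
    (h : (g t + t) * g w + (t ^ 2 + t) * w + g t * t ^ 2 + t = 0) : False := by
  have two : (2 : F) = 0 := CharTwo.two_eq_zero
  have four : (4 : F) = 0 := by linear_combination 2 * two
  have hgg := hg t
  have hgw := hg w
  have h2 := congrArg g h
  simp only [map_add, map_mul, map_pow, map_zero, hgg, hgw] at h2
  have s0 : g t ≠ 0 := by simpa using h0
  have t1 : t + 1 ≠ 0 := fun hh => h1 (by linear_combination hh - two)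
  have st : g t + t ≠ 0 := by
    intro hh
    have h3 := congrArg g hh
    simp only [map_add, hgg, map_zero] at h3
    have : t * (t + 1) = 0 := by linear_combination h3 - hh + t * two
    exact (mul_ne_zero h0 t1) this
  have s1 : g t + 1 ≠ 0 := by
    have := (map_ne_zero g).2 t1
    simpa using this
  have ts : t ^ 2 + g t ≠ 0 := by
    have := (map_ne_zero g).2 st
    simpa [hgg] using this
  generalize hs : g t = s at *
  have key : ((s + t) * w + s * (t + 1)) * ((t ^ 2 + s) * w + s * (t + 1) ^ 2) = 0 := by
    linear_combination (norm := skip) (s + t) * h2 + (s ^ 2 + s) * h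
    ring_nf
    simp [two, four]
  rcases mul_eq_zero.1 key with k | k
  · have k2 := congrArg g k
    simp only [map_add, map_mul, map_one, map_zero, hs, hgg] at k2
    have : (t ^ 2 * (s + 1)) * (s * (t + 1) ^ 2) = 0 := by
      generalize g w = W at *
      clear key h2
      linear_combination (norm := skip) (s+t)*(t^2+s) * h + (t^2+s)*(t^2+t) * k + (s+t)^2 * k2
      ring_nf
      simp [two, four]
    exact mul_ne_zero (mul_ne_zero (pow_ne_zero 2 h0) s1) (mul_ne_zero s0 (pow_ne_zero 2 t1)) this
  · have k2 := congrArg g k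
    simp only [map_add, map_mul, map_one, map_zero, map_pow, hs, hgg] at k2
    have : (t ^ 2 * (s + 1)) * (s * (t + 1) ^ 2) = 0 := by
      generalize g w = W at *
      clear key h2
      linear_combination (norm := skip) (s+t)*(t^2+s) * h + (s+t)*(t^2+t) * k + (t^2+s) * k2
      ring_nf
      simp [two, four]
    exact mul_ne_zero (mul_ne_zero (pow_ne_zero 2 h0) s1) (mul_ne_zero s0 (pow_ne_zero 2 t1)) this

theorem tits_line {F : Type} [Field F] [CharP F 2] (g : F →+* F)
    (hg : ∀ x, g (g x) = x ^ 2) (t a b y : F) (h0 : t ≠ 0) (h1 : t ≠ 1)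
    (hab : a ≠ 0 ∨ b ≠ 0)
    (h : (g t + t) * g a + (t ^ 2 + t) * a * b + (t ^ 2 + t) * b ^ 2 * g y
      + (g t + t) * g b * y ^ 2 + (g t * t ^ 2 + t) * (g b * b ^ 2) = 0) : False := by
  have two : (2 : F) = 0 := CharTwo.two_eq_zero
  have four : (4 : F) = 0 := by linear_combination 2 * two
  have hgg := hg t
  have t1 : t + 1 ≠ 0 := fun hh => h1 (by linear_combination hh - two)
  have st : g t + t ≠ 0 := by
    intro hh
    have h3 := congrArg g hh
    simp only [map_add, hgg, map_zero] at h3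
    have : t * (t + 1) = 0 := by linear_combination h3 - hh + t * two
    exact (mul_ne_zero h0 t1) this
  by_cases hb : b = 0
  · subst hb
    simp at h
    rcases h with h | h
    · exact st h
    · simp [h] at hab
  · have gb : g b ≠ 0 := by simpa using hb
    refine tits_norm_form g hg t (a / (g b * b) + g (y / b)) h0 h1 ?_
    simp only [map_add, map_div₀, map_mul, hg, div_pow]
    field_simp
    linear_combination h

theorem tits_affine {F : Type} [Field F] [CharP F 2] (g : F →+* F)
    (hg : ∀ x, g (g x) = x ^ 2) (x0 y0 x1 y1 x2 y2 c0 c1 c2 : F)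
    (h01 : ¬ (x0 = x1 ∧ y0 = y1)) (h02 : ¬ (x0 = x2 ∧ y0 = y2)) (h12 : ¬ (x1 = x2 ∧ y1 = y2))
    (e1 : c0 + c1 + c2 = 0) (ex : c0 * x0 + c1 * x1 + c2 * x2 = 0)
    (ey : c0 * y0 + c1 * y1 + c2 * y2 = 0)
    (ez : c0 * (g x0 + x0 * y0 + g y0 * y0 ^ 2) + c1 * (g x1 + x1 * y1 + g y1 * y1 ^ 2)
      + c2 * (g x2 + x2 * y2 + g y2 * y2 ^ 2) = 0) : c0 = 0 ∧ c1 = 0 ∧ c2 = 0 := by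
  have two : (2 : F) = 0 := CharTwo.two_eq_zero
  have four : (4 : F) = 0 := by linear_combination 2 * two
  by_cases z2 : c2 = 0
  · subst z2
    have : c1 = -c0 := by linear_combination e1
    subst this
    by_cases z0 : c0 = 0
    · simp [z0]
    · exact (h01 ⟨mul_left_cancel₀ z0 (by linear_combination ex),
        mul_left_cancel₀ z0 (by linear_combination ey)⟩).elim
  by_cases z1 : c1 = 0
  · subst z1
    have : c0 = -c2 := by linear_combination e1
    subst this
    exact (h02 ⟨mul_left_cancel₀ z2 (by linear_combination -ex),
        mul_left_cancel₀ z2 (by linear_combination -ey)⟩).elim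
  by_cases z0 : c0 = 0
  · subst z0
    have : c1 = -c2 := by linear_combination e1
    subst this
    exact (h12 ⟨mul_left_cancel₀ z2 (by linear_combination -ex),
        mul_left_cancel₀ z2 (by linear_combination -ey)⟩).elim
  exfalso
  obtain ⟨t, rfl⟩ : ∃ t, c1 = t * c2 := ⟨c1 / c2, by field_simp⟩
  have t0 : t ≠ 0 := fun hh => z1 (by simp [hh])
  have t1 : t ≠ 1 := by
    rintro rfl
    exact z0 (by linear_combination e1 - c2 * two)
  obtain ⟨a, rfl⟩ : ∃ a, x1 = x0 + a := ⟨x1 - x0, by ring⟩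
  obtain ⟨b, rfl⟩ : ∃ b, y1 = y0 + b := ⟨y1 - y0, by ring⟩
  have hx2 : x2 = x0 + t * a :=
    mul_left_cancel₀ z2 (by linear_combination ex - x0 * e1 - c2 * t * a * two)
  have hy2 : y2 = y0 + t * b :=
    mul_left_cancel₀ z2 (by linear_combination ey - y0 * e1 - c2 * t * b * two)
  subst hx2 hy2
  have hc0 : c0 = t * c2 + c2 := by linear_combination e1 - (t * c2 + c2) * two
  subst hc0
  refine tits_line g hg t a b y0 t0 t1 ?_ (mul_left_cancel₀ z2 ?_)
  · by_contra! hh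
    exact h01 (by simp [hh.1, hh.2])
  · simp only [map_add, map_mul] at ez
    linear_combination (norm := skip) ez
    ring_nf
    simp [two, four]

theorem tits_ovoid_is_ovoid {q e : ℕ} (he : 1 ≤ e) (hq : q = 2 ^ (2 * e + 1))
    (F : Type) [Field F] [Fintype F] (hF : Fintype.card F = q) :
    let σ : ℕ := 2 ^ (e + 1)
    let T : Set (Fin 4 → F) :=
      insert ![0, 0, 1, 0] {w | ∃ x y : F, w = ![x, y, x ^ σ + x * y + y ^ (σ + 2), 1]}
    T.ncard = q ^ 2 + 1 ∧
    (∀ u ∈ T, ∀ v ∈ T, u ≠ v → ∀ c : F, v ≠ c • u) ∧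
    (∀ u ∈ T, ∀ v ∈ T, ∀ w ∈ T, u ≠ v → u ≠ w → v ≠ w →
      LinearIndependent F ![u, v, w]) := by
  intro σ T
  have : Fact (Nat.Prime 2) := ⟨Nat.prime_two⟩
  have hcard : Fintype.card F = 2 ^ (2 * e + 1) := hF.trans hq
  haveI : CharP F 2 := charP_of_card_eq_prime_pow (f := 2 * e + 1) (by
    simpa [Nat.card_eq_fintype_card] using hcard)
  obtain ⟨g, hgσ⟩ : ∃ g : F →+* F, ∀ x, g x = x ^ σ :=
    ⟨iterateFrobenius F 2 (e + 1), fun x => iterateFrobenius_def ..⟩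
  have hg : ∀ x, g (g x) = x ^ 2 := by
    intro x
    have : σ * σ = Fintype.card F * 2 := by
      rw [hcard]; simp only [σ]; ring
    rw [hgσ, hgσ, ← pow_mul, this, pow_mul, FiniteField.pow_card]
  have hp : ∀ x y : F, x ^ σ + x * y + y ^ (σ + 2) = g x + x * y + g y * y ^ 2 := by
    intro x y; rw [pow_add, hgσ, hgσ]
  refine ⟨?_, ?_, ?_⟩
  · have hr : {w : Fin 4 → F | ∃ x y : F, w = ![x, y, x ^ σ + x * y + y ^ (σ + 2), 1]}
        = Set.range (fun p : F × F =>
          (![p.1, p.2, p.1 ^ σ + p.1 * p.2 + p.2 ^ (σ + 2), 1] : Fin 4 → F)) := by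
      ext w
      simp [eq_comm]
    have hn : (![0, 0, 1, 0] : Fin 4 → F) ∉
        {w : Fin 4 → F | ∃ x y : F, w = ![x, y, x ^ σ + x * y + y ^ (σ + 2), 1]} := by
      rintro ⟨x, y, h⟩
      have := congrFun h 3
      simp at this
    rw [Set.ncard_insert_of_notMem hn (Set.toFinite _), hr, Set.ncard_range_of_injective]
    · simp [Nat.card_eq_fintype_card, hF, sq]
    · rintro ⟨a, b⟩ ⟨c, d⟩ h
      have h1 := congrFun h 0
      have h2 := congrFun h 1
      simp at h1 h2
      simp [h1, h2]
  · rintro u (rfl | ⟨x, y, rfl⟩) v (rfl | ⟨x', y', rfl⟩) huv c h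
    · exact huv rfl
    · have := congrFun h 3
      simp at this
    · have h3 := congrFun h 3
      have h2 := congrFun h 2
      simp at h3
      simp [← h3] at h2
    · have h3 := congrFun h 3
      simp at h3
      subst h3
      exact huv (by simpa using h.symm)
  · intro u hu v hv w hw huv huw hvw
    rw [Fintype.linearIndependent_iff]
    intro c hc
    have H : ∀ i, c 0 * u i + c 1 * v i + c 2 * w i = 0 := by
      intro i
      have := congrFun hc i
      simpa [Fin.sum_univ_three] using this
    suffices c 0 = 0 ∧ c 1 = 0 ∧ c 2 = 0 by
      intro i
      fin_cases i
      exacts [this.1, this.2.1, this.2.2]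
    clear hc
    generalize c 0 = c0 at *
    generalize c 1 = c1 at *
    generalize c 2 = c2 at *
    have H0 := H 0
    have H1 := H 1
    have H2 := H 2
    have H3 := H 3
    clear H
    have pair : ∀ x y x' y' k k' l : F,
        (![x, y, x ^ σ + x * y + y ^ (σ + 2), 1] : Fin 4 → F)
          ≠ ![x', y', x' ^ σ + x' * y' + y' ^ (σ + 2), 1] →
        k * x + k' * x' = 0 → k * y + k' * y' = 0 → k + k' = 0 →
        l + k * (x ^ σ + x * y + y ^ (σ + 2)) + k' * (x' ^ σ + x' * y' + y' ^ (σ + 2)) = 0 →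
        l = 0 ∧ k = 0 ∧ k' = 0 := by
      intro x y x' y' k k' l hne hx hy hk hl
      have : k' = -k := by linear_combination hk
      subst this
      by_cases z : k = 0
      · subst z
        simpa using hl
      · have e1 : x = x' := mul_left_cancel₀ z (by linear_combination hx)
        have e2 : y = y' := mul_left_cancel₀ z (by linear_combination hy)
        subst e1 e2
        exact (hne rfl).elim
    rcases hu with rfl | ⟨x0, y0, rfl⟩ <;> rcases hv with rfl | ⟨x1, y1, rfl⟩ <;>
      rcases hw with rfl | ⟨x2, y2, rfl⟩
    · exact (huv rfl).elim
    · exact (huv rfl).elim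
    · exact (huw rfl).elim
    · simp at H0 H1 H2 H3
      exact pair _ _ _ _ _ _ _ hvw H0 H1 H3 H2
    · exact (hvw rfl).elim
    · simp at H0 H1 H2 H3
      have := pair _ _ _ _ _ _ c1 huw H0 H1 H3 (by linear_combination H2)
      tauto
    · simp at H0 H1 H2 H3
      have := pair _ _ _ _ _ _ c2 huv H0 H1 H3 (by linear_combination H2)
      tauto
    · simp at H0 H1 H2 H3
      simp only [hp] at H2
      refine tits_affine g hg x0 y0 x1 y1 x2 y2 c0 c1 c2 ?_ ?_ ?_ H3 H0 H1 H2
      · rintro ⟨rfl, rfl⟩; exact huv rfl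
      · rintro ⟨rfl, rfl⟩; exact huw rfl
      · rintro ⟨rfl, rfl⟩; exact hvw rfl
end
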